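/- arXiv:1904.08213 — 6 statements merged into one kernel-verified Lean document; each statement's English description precedes it below -/
import Mathlib

section
/- Let 0 < r < R and 0 < r_* < R_*, and let λ : [r,R] → ℝ be continuous, positive and nondecreasing. Suppose Φ : [r,R] → ℝ is a C¹ function satisfying s·λ(s)·Φ'(s) = λ(s)² − Φ(s)² and Φ(s) ≥ 0 for all s ∈ [r,R], and H : [r,R] → ℝ is a C¹ function satisfying s·λ(s)·H'(s) = H(s)·Φ(s), H(r) = r_* and H(R) = R_*. Then for every orientation-preserving C¹ diffeomorphism h from the annulus A(r,R) onto A(r_*,R_*) that extends continuously to the closed annuli with |h(z)| = r_* when |z| = r and |h(z)| = R_* when |z| = R, one has ∫_{A(r,R)} λ(|z|)·‖Dh(z)‖² dz ≥ 2π(R_*²·Φ(R) − r_*²·Φ(r)). -/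
/-!
Write `f(s, t) = h(s e^{it})`, with partial derivatives `f₁ = ∂ₛ f` and `f₂ = ∂ₜ f`. In polar
coordinates the energy density is `s λ |f₁|² + (λ / s) |f₂|²`.

**A calibration.** The function `p = p₀ / (1 + p₀ τ)`, where `τ(s) = ∫_r^s dσ / (σ λ(σ))` and
`p₀ = max (Φ(r) - λ(r)) 0`, satisfies `p' = -p² / (s λ)`. The equation for `Φ` then makes
`w = p - Φ` satisfy `w' = (-λ² - 2pw + w²) / (s λ)`. Two comparison arguments, the second of which
uses that `λ` is nondecreasing, give `|w| ≤ λ` (`exists_pair`). With `a × b = Im(conj a · b)`,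
completing the square shows pointwise
`s λ |f₁|² + (λ / s) |f₂|² = |s λ f₁ - p f - i w f₂|² / (s λ) + ((λ² - w²) / (s λ)) (|f₂|² - f × f₂)
  + p' |f|² + p ∂ₛ |f|² - w' (f × f₂) - 2 w (f₁ × f₂)`.
Integrated over a circle, the second term is nonnegative by the isoperimetric inequality
`∫ f × f₂ dt ≤ ∫ |f₂|² dt` (`isoperimetric`, from Wirtinger's inequality), and the last line becomes
the `s`-derivative of `p ∫ |f|² dt - w ∫ f × f₂ dt`, because Green's formula gives
`d/ds ∫ f × f₂ dt = 2 ∫ f₁ × f₂ dt`. Hence the energy of a closed subannulus is at least the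
increment of `p ∫ |f|² dt - w ∫ f × f₂ dt` (`Cyl.core`).

**Boundary values.** As the subannuli exhaust `A(r, R)`, the integral `∫ |f|² dt` tends to
`2π r_*²` and `2π R_*²` by continuity of `h` on the closed annulus. The same limits hold for
`∫ f × f₂ dt`, twice the enclosed area, although `h` need not be differentiable on the boundary
(`OCyl.tendsto_area`). The forms `g(ρ²) dφ`, with `g` vanishing near one boundary circle and equal to
`u ↦ u - c` away from it, identify these limits as `r_*² W` and `R_*² W`, where `W` is the constant total
increment of `arg f` along the circles. The difference of the limits is twice the area of the
target by the change of variables formula, whence `W = 2π`. In the limit the bound becomes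
`2π (R_*² (p - w)(R) - r_*² (p - w)(r))`, and `p - w = Φ`.
-/

open Set MeasureTheory

/-! ### Calculus on the plane and on circles -/

/-- The planar cross product `Im (conj a * b)` of two complex numbers. -/
def cross (a b : ℂ) : ℝ := a.re * b.im - a.im * b.re

lemma continuous_cross {X : Type*} [TopologicalSpace X] {a b : X → ℂ}
    (ha : Continuous a) (hb : Continuous b) : Continuous fun x => cross (a x) (b x) := by
  unfold cross
  fun_prop

lemma hasDerivAt_re {f : ℝ → ℂ} {f' : ℂ} {x : ℝ} (h : HasDerivAt f f' x) :
    HasDerivAt (fun y => (f y).re) f'.re x := by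
  exact Complex.reCLM.hasFDerivAt.comp_hasDerivAt x h

lemma hasDerivAt_im {f : ℝ → ℂ} {f' : ℂ} {x : ℝ} (h : HasDerivAt f f' x) :
    HasDerivAt (fun y => (f y).im) f'.im x := by
  exact Complex.imCLM.hasFDerivAt.comp_hasDerivAt x h

lemma hasDerivAt_cross {f g : ℝ → ℂ} {f' g' : ℂ} {x : ℝ} (hf : HasDerivAt f f' x)
    (hg : HasDerivAt g g' x) :
    HasDerivAt (fun y => cross (f y) (g y)) (cross f' (g x) + cross (f x) g') x := by
  unfold cross
  refine (((hasDerivAt_re hf).mul (hasDerivAt_im hg)).sub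
    ((hasDerivAt_im hf).mul (hasDerivAt_re hg))).congr_deriv ?_
  ring

lemma hasDerivAt_norm_sq {f : ℝ → ℂ} {f' : ℂ} {x : ℝ} (h : HasDerivAt f f' x) :
    HasDerivAt (fun y => ‖f y‖ ^ 2) (2 * ((f x).re * f'.re + (f x).im * f'.im)) x := by
  simp only [Complex.sq_norm, Complex.normSq_apply]
  refine (((hasDerivAt_re h).mul (hasDerivAt_re h)).add
    ((hasDerivAt_im h).mul (hasDerivAt_im h))).congr_deriv ?_
  ring

/-- Differentiation under the integral sign for jointly continuous data, where the derivative
in the parameter is only required near the base point. -/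
lemma hasDerivAt_param {F F' : ℝ → ℝ → ℝ} {a b x₀ : ℝ} {U : Set ℝ} (hU : U ∈ nhds x₀)
    (hF : Continuous (Function.uncurry F)) (hF' : Continuous (Function.uncurry F'))
    (hd : ∀ x ∈ U, ∀ t, HasDerivAt (fun y => F y t) (F' x t) x) :
    HasDerivAt (fun x => ∫ t in a..b, F x t) (∫ t in a..b, F' x₀ t) x₀ := by
  obtain ⟨ε, hε, hεU⟩ := Metric.nhds_basis_closedBall.mem_iff.1 hU
  have hK : IsCompact (Metric.closedBall x₀ ε ×ˢ uIcc a b) :=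
    (isCompact_closedBall x₀ ε).prod isCompact_uIcc
  obtain ⟨C, hC⟩ := hK.exists_bound_of_continuousOn hF'.continuousOn
  have c1 : ∀ x, Continuous (F x) := fun x => hF.comp (by fun_prop : Continuous fun t => (x, t))
  have c2 : ∀ x, Continuous (F' x) := fun x => hF'.comp (by fun_prop : Continuous fun t => (x, t))
  refine (intervalIntegral.hasDerivAt_integral_of_dominated_loc_of_deriv_le
    (bound := fun _ => C) (Metric.closedBall_mem_nhds x₀ hε) ?_ ?_ ?_ ?_ ?_ ?_).2
  · exact Filter.Eventually.of_forall fun x => (c1 x).aestronglyMeasurable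
  · exact (c1 x₀).intervalIntegrable _ _
  · exact (c2 x₀).aestronglyMeasurable
  · refine Filter.Eventually.of_forall fun t ht x hx => hC (x, t) ⟨hx, uIoc_subset_uIcc ht⟩
  · exact intervalIntegrable_const
  · exact Filter.Eventually.of_forall fun t ht x hx => hd x (hεU hx) t

lemma continuous_param {X : Type*} [TopologicalSpace X] {F : X → ℝ → ℝ} {a b : ℝ}
    (hF : Continuous (Function.uncurry F)) :
    Continuous fun x => ∫ t in a..b, F x t :=
  intervalIntegral.continuous_parametric_intervalIntegral_of_continuous' hF a b

/-- Wirtinger's inequality combined with `2ab ≤ a² + b²`: for a closed curve `f`, twice the signed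
enclosed area is at most `∫ |f'|²`. -/
lemma isoperimetric {f f' : ℝ → ℂ} (hf : ∀ t, HasDerivAt f (f' t) t) (hc : Continuous f')
    (hper : f Real.pi = f (-Real.pi)) :
    ∫ t in (-Real.pi)..Real.pi, cross (f t) (f' t) ≤ ∫ t in (-Real.pi)..Real.pi, ‖f' t‖ ^ 2 := by
  have hab : -Real.pi < Real.pi := by linarith [Real.pi_pos]
  have hfc : Continuous f := continuous_iff_continuousAt.2 fun t => (hf t).continuousAt
  set c : ℂ := fourierCoeffOn hab f 0 with hcdef
  set g : ℝ → ℂ := fun t => f t - c with hg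
  have hgc : Continuous g := by fun_prop
  have hgd : ∀ t, HasDerivAt g (f' t) t := fun t => (hf t).sub_const c
  have L2 : ∀ {u : ℝ → ℂ}, Continuous u →
      MemLp u 2 (volume.restrict (Ioc (-Real.pi) Real.pi)) := fun {u} hu =>
    (memLp_two_iff_integrable_sq_norm hu.aestronglyMeasurable).2
      ((by fun_prop : Continuous fun x => ‖u x‖ ^ 2).integrableOn_Ioc)
  have S1 := hasSum_sq_fourierCoeffOn hab (L2 hgc)
  have S2 := hasSum_sq_fourierCoeffOn hab (L2 hc)
  have hle : ∀ n : ℤ, ‖fourierCoeffOn hab g n‖ ^ 2 ≤ ‖fourierCoeffOn hab f' n‖ ^ 2 := by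
    intro n
    gcongr
    by_cases hn : n = 0
    · subst hn
      have : fourierCoeffOn hab g 0 = 0 := by
        rw [fourierCoeffOn_eq_integral] at hcdef ⊢
        simp only [neg_zero, fourier_zero, one_smul] at hcdef ⊢
        rw [hg, intervalIntegral.integral_sub (hfc.intervalIntegrable _ _)
          intervalIntegrable_const, intervalIntegral.integral_const, smul_sub, ← hcdef,
          smul_smul, one_div, inv_mul_cancel₀ (by linarith), one_smul, sub_self]
      rw [this]
      simp
    · rw [fourierCoeffOn_of_hasDerivAt hab hn (fun x _ => hgd x) (hc.intervalIntegrable _ _)]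
      have : g Real.pi - g (-Real.pi) = 0 := by simp [hg, hper]
      rw [this, mul_zero, zero_sub, norm_mul, norm_neg, norm_mul, ← mul_assoc]
      refine mul_le_of_le_one_left (norm_nonneg _) ?_
      have h1 : ‖((Real.pi : ℝ) : ℂ) - ((-Real.pi : ℝ) : ℂ)‖ = 2 * Real.pi := by
        rw [← Complex.ofReal_sub, Complex.norm_real, Real.norm_eq_abs, abs_of_pos (by linarith)]
        ring
      have h2 : (1 : ℝ) ≤ ‖(n : ℂ)‖ := by
        rw [Complex.norm_intCast]
        exact_mod_cast Int.one_le_abs hn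
      rw [h1]
      have h3 : ‖(1 : ℂ) / (-2 * Real.pi * Complex.I * n)‖ = 1 / (2 * Real.pi * ‖(n : ℂ)‖) := by
        simp [abs_of_pos Real.pi_pos]
      rw [h3, div_mul_eq_mul_div, one_mul]
      rw [div_le_one (by positivity)]
      nlinarith [Real.pi_pos]
  have hW : ∫ t in (-Real.pi)..Real.pi, ‖g t‖ ^ 2 ≤ ∫ t in (-Real.pi)..Real.pi, ‖f' t‖ ^ 2 := by
    have := hasSum_le hle S1 S2
    rw [smul_eq_mul, smul_eq_mul] at this
    exact le_of_mul_le_mul_left this (inv_pos.2 (by linarith))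
  have hii : ∀ {u : ℝ → ℝ}, Continuous u → IntervalIntegrable u volume (-Real.pi) Real.pi :=
    fun hu => hu.intervalIntegrable _ _
  -- translating the curve does not change the enclosed area
  have htr : ∫ t in (-Real.pi)..Real.pi, cross c (f' t) = 0 := by
    have := intervalIntegral.integral_eq_sub_of_hasDerivAt (a := -Real.pi) (b := Real.pi)
      (f := fun t => cross c (f t)) (f' := fun t => cross c (f' t))
      (fun t _ => (hasDerivAt_cross (hasDerivAt_const t c) (hf t)).congr_deriv (by simp [cross]))
      (hii (continuous_cross continuous_const hc))
    rw [this, hper, sub_self]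
  have e1 : ∫ t in (-Real.pi)..Real.pi, cross (f t) (f' t)
      = ∫ t in (-Real.pi)..Real.pi, cross (g t) (f' t) := by
    rw [← sub_eq_zero, ← intervalIntegral.integral_sub (hii (continuous_cross hfc hc))
      (hii (continuous_cross hgc hc)), ← htr]
    congr 1
    ext t
    simp [cross, hg]
    ring
  have e2 : ∫ t in (-Real.pi)..Real.pi, cross (g t) (f' t)
      ≤ ∫ t in (-Real.pi)..Real.pi, (1 / 2 * ‖g t‖ ^ 2 + 1 / 2 * ‖f' t‖ ^ 2) := by
    refine intervalIntegral.integral_mono hab.le (hii (continuous_cross hgc hc))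
      (hii (by fun_prop)) fun t => ?_
    simp only [Complex.sq_norm, Complex.normSq_apply, cross]
    nlinarith [sq_nonneg ((g t).re - (f' t).im), sq_nonneg ((g t).im + (f' t).re)]
  rw [intervalIntegral.integral_add (hii (by fun_prop)) (hii (by fun_prop)),
    intervalIntegral.integral_const_mul, intervalIntegral.integral_const_mul] at e2
  linarith

/-- Green's formula on the cylinder for the one-form `⟨i k, dh⟩`, for maps that are merely `C¹`.
Since `∂ₛ h_θ` need not exist, `h_θ` is replaced by the increment `h (θ + δ) - h θ`; the
resulting identity is differentiated in `δ` at `0`. -/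
lemma green {a b : ℝ} (hab : a ≤ b) {k k₁ k₂ h h₁ h₂ : ℝ → ℝ → ℂ}
    (ck : Continuous (Function.uncurry k)) (ck₁ : Continuous (Function.uncurry k₁))
    (ck₂ : Continuous (Function.uncurry k₂)) (ch : Continuous (Function.uncurry h))
    (ch₁ : Continuous (Function.uncurry h₁)) (ch₂ : Continuous (Function.uncurry h₂))
    (dk₁ : ∀ s ∈ Ioo a b, ∀ t, HasDerivAt (fun x => k x t) (k₁ s t) s)
    (dk₂ : ∀ s t, HasDerivAt (k s) (k₂ s t) t)
    (dh₁ : ∀ s ∈ Ioo a b, ∀ t, HasDerivAt (fun x => h x t) (h₁ s t) s)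
    (dh₂ : ∀ s t, HasDerivAt (h s) (h₂ s t) t)
    (pk : ∀ s, Function.Periodic (k s) (2 * Real.pi))
    (ph₁ : ∀ s, Function.Periodic (h₁ s) (2 * Real.pi)) :
    (∫ t in (-Real.pi)..Real.pi, cross (k b t) (h₂ b t))
      - (∫ t in (-Real.pi)..Real.pi, cross (k a t) (h₂ a t))
    = ∫ s in a..b, ∫ t in (-Real.pi)..Real.pi,
        (cross (k₁ s t) (h₂ s t) - cross (k₂ s t) (h₁ s t)) := by
  have comp : ∀ {X : Type} [TopologicalSpace X] {u : ℝ → ℝ → ℂ} {p q : X → ℝ},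
      Continuous (Function.uncurry u) → Continuous p → Continuous q →
      Continuous fun x => u (p x) (q x) := fun hu hp hq => hu.comp (hp.prodMk hq)
  have shift : ∀ (u v : ℝ → ℂ) (δ : ℝ), Function.Periodic u (2 * Real.pi) →
      Function.Periodic v (2 * Real.pi) →
      ∫ t in (-Real.pi)..Real.pi, cross (u t) (v (t + δ))
        = ∫ t in (-Real.pi)..Real.pi, cross (u (t - δ)) (v t) := by
    intro u v δ hu hv
    have hp : Function.Periodic (fun t => cross (u (t - δ)) (v t)) (2 * Real.pi) := by
      intro t
      simp only [hv t, show t + 2 * Real.pi - δ = t - δ + 2 * Real.pi by ring, hu (t - δ)]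
    have e := intervalIntegral.integral_comp_add_right (a := -Real.pi) (b := Real.pi)
      (fun t => cross (u (t - δ)) (v t)) δ
    simp only [add_sub_cancel_right] at e
    rw [e]
    have e2 := hp.intervalIntegral_add_eq (-Real.pi + δ) (-Real.pi)
    rwa [show -Real.pi + δ + 2 * Real.pi = Real.pi + δ by ring,
      show -Real.pi + 2 * Real.pi = Real.pi by ring] at e2
  -- the identity for increments
  have key : ∀ δ : ℝ,
      (∫ t in (-Real.pi)..Real.pi, cross (k b t) (h b (t + δ) - h b t))
        - (∫ t in (-Real.pi)..Real.pi, cross (k a t) (h a (t + δ) - h a t))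
      = ∫ s in a..b, ∫ t in (-Real.pi)..Real.pi,
        (cross (k₁ s t) (h s (t + δ) - h s t) + cross (k s (t - δ) - k s t) (h₁ s t)) := by
    intro δ
    have cQ : Continuous (Function.uncurry fun s t => cross (k s t) (h s (t + δ) - h s t)) :=
      continuous_cross (comp ck (by fun_prop) (by fun_prop))
        ((comp ch (by fun_prop) (by fun_prop)).sub (comp ch (by fun_prop) (by fun_prop)))
    have cQ' : Continuous (Function.uncurry fun s t => cross (k₁ s t) (h s (t + δ) - h s t)
        + cross (k s t) (h₁ s (t + δ) - h₁ s t)) :=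
      (continuous_cross (comp ck₁ (by fun_prop) (by fun_prop))
        ((comp ch (by fun_prop) (by fun_prop)).sub (comp ch (by fun_prop) (by fun_prop)))).add
      (continuous_cross (comp ck (by fun_prop) (by fun_prop))
        ((comp ch₁ (by fun_prop) (by fun_prop)).sub (comp ch₁ (by fun_prop) (by fun_prop))))
    rw [← intervalIntegral.integral_eq_sub_of_hasDerivAt_of_le hab
      (f := fun s => ∫ t in (-Real.pi)..Real.pi, cross (k s t) (h s (t + δ) - h s t))
      (continuous_param cQ).continuousOn
      (fun s hs => hasDerivAt_param (Ioo_mem_nhds hs.1 hs.2) cQ cQ' fun x hx t =>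
        hasDerivAt_cross (dk₁ x hx t) ((dh₁ x hx (t + δ)).sub (dh₁ x hx t)))
      ((continuous_param cQ').intervalIntegrable _ _)]
    congr 1
    ext s
    have c1 : Continuous fun t => cross (k₁ s t) (h s (t + δ) - h s t) :=
      continuous_cross (comp ck₁ (by fun_prop) (by fun_prop))
        ((comp ch (by fun_prop) (by fun_prop)).sub (comp ch (by fun_prop) (by fun_prop)))
    have c2 : Continuous fun t => cross (k s t) (h₁ s (t + δ)) :=
      continuous_cross (comp ck (by fun_prop) (by fun_prop)) (comp ch₁ (by fun_prop) (by fun_prop))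
    have c3 : Continuous fun t => cross (k s t) (h₁ s t) :=
      continuous_cross (comp ck (by fun_prop) (by fun_prop)) (comp ch₁ (by fun_prop) (by fun_prop))
    have c4 : Continuous fun t => cross (k s (t - δ)) (h₁ s t) :=
      continuous_cross (comp ck (by fun_prop) (by fun_prop)) (comp ch₁ (by fun_prop) (by fun_prop))
    have x1 : ∀ t, cross (k s t) (h₁ s (t + δ) - h₁ s t)
        = cross (k s t) (h₁ s (t + δ)) - cross (k s t) (h₁ s t) := fun t => by
      simp [cross]; ring
    have x2 : ∀ t, cross (k s (t - δ) - k s t) (h₁ s t)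
        = cross (k s (t - δ)) (h₁ s t) - cross (k s t) (h₁ s t) := fun t => by
      simp [cross]; ring
    simp only [x1, x2]
    rw [intervalIntegral.integral_add (c1.intervalIntegrable _ _)
        ((c2.intervalIntegrable _ _).sub (c3.intervalIntegrable _ _)),
      intervalIntegral.integral_add (c1.intervalIntegrable _ _)
        ((c4.intervalIntegrable _ _).sub (c3.intervalIntegrable _ _)),
      intervalIntegral.integral_sub (c2.intervalIntegrable _ _) (c3.intervalIntegrable _ _),
      intervalIntegral.integral_sub (c4.intervalIntegrable _ _) (c3.intervalIntegrable _ _),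
      shift _ _ δ (pk s) (ph₁ s)]
  -- differentiate both sides at `δ = 0`
  have dQ : ∀ s, HasDerivAt
      (fun δ => ∫ t in (-Real.pi)..Real.pi, cross (k s t) (h s (t + δ) - h s t))
      (∫ t in (-Real.pi)..Real.pi, cross (k s t) (h₂ s t)) 0 := by
    intro s
    have := hasDerivAt_param (a := -Real.pi) (b := Real.pi) (x₀ := 0) (U := univ)
      (F := fun δ t => cross (k s t) (h s (t + δ) - h s t))
      (F' := fun δ t => cross (k s t) (h₂ s (t + δ))) Filter.univ_mem
      (continuous_cross (comp ck (by fun_prop) (by fun_prop))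
        ((comp ch (by fun_prop) (by fun_prop)).sub (comp ch (by fun_prop) (by fun_prop))))
      (continuous_cross (comp ck (by fun_prop) (by fun_prop)) (comp ch₂ (by fun_prop) (by fun_prop)))
      (fun δ _ t => (hasDerivAt_cross (hasDerivAt_const δ (k s t))
        (((dh₂ s (t + δ)).comp_const_add t δ).sub_const (h s t))).congr_deriv (by simp [cross]))
    simpa using this
  have dRin : ∀ δ s, HasDerivAt (fun δ => ∫ t in (-Real.pi)..Real.pi,
        (cross (k₁ s t) (h s (t + δ) - h s t) + cross (k s (t - δ) - k s t) (h₁ s t)))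
      (∫ t in (-Real.pi)..Real.pi,
        (cross (k₁ s t) (h₂ s (t + δ)) + cross (-k₂ s (t - δ)) (h₁ s t))) δ := by
    intro δ s
    refine hasDerivAt_param (U := univ)
      (F := fun δ t => cross (k₁ s t) (h s (t + δ) - h s t) + cross (k s (t - δ) - k s t) (h₁ s t))
      (F' := fun δ t => cross (k₁ s t) (h₂ s (t + δ)) + cross (-k₂ s (t - δ)) (h₁ s t))
      Filter.univ_mem ?_ ?_ ?_
    · exact (continuous_cross (comp ck₁ (by fun_prop) (by fun_prop))
        ((comp ch (by fun_prop) (by fun_prop)).sub (comp ch (by fun_prop) (by fun_prop)))).add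
        (continuous_cross ((comp ck (by fun_prop) (by fun_prop)).sub
          (comp ck (by fun_prop) (by fun_prop))) (comp ch₁ (by fun_prop) (by fun_prop)))
    · exact (continuous_cross (comp ck₁ (by fun_prop) (by fun_prop))
        (comp ch₂ (by fun_prop) (by fun_prop))).add
        (continuous_cross (comp ck₂ (by fun_prop) (by fun_prop)).neg
          (comp ch₁ (by fun_prop) (by fun_prop)))
    · intro δ _ t
      refine ((hasDerivAt_cross (hasDerivAt_const δ (k₁ s t))
        (((dh₂ s (t + δ)).comp_const_add t δ).sub_const (h s t))).add
        (hasDerivAt_cross (((dk₂ s (t - δ)).comp_const_sub t δ).sub_const (k s t))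
          (hasDerivAt_const δ (h₁ s t)))).congr_deriv (by simp [cross])
  have dR := hasDerivAt_param (a := a) (b := b) (x₀ := 0) (U := univ)
      (F := fun δ s => ∫ t in (-Real.pi)..Real.pi,
        (cross (k₁ s t) (h s (t + δ) - h s t) + cross (k s (t - δ) - k s t) (h₁ s t)))
      (F' := fun δ s => ∫ t in (-Real.pi)..Real.pi,
        (cross (k₁ s t) (h₂ s (t + δ)) + cross (-k₂ s (t - δ)) (h₁ s t))) Filter.univ_mem
      (continuous_param (X := ℝ × ℝ) (F := fun x t => cross (k₁ x.2 t) (h x.2 (t + x.1) - h x.2 t)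
          + cross (k x.2 (t - x.1) - k x.2 t) (h₁ x.2 t))
        ((continuous_cross (comp ck₁ (by fun_prop) (by fun_prop))
        ((comp ch (by fun_prop) (by fun_prop)).sub (comp ch (by fun_prop) (by fun_prop)))).add
        (continuous_cross ((comp ck (by fun_prop) (by fun_prop)).sub
          (comp ck (by fun_prop) (by fun_prop))) (comp ch₁ (by fun_prop) (by fun_prop)))))
      (continuous_param (X := ℝ × ℝ) (F := fun x t => cross (k₁ x.2 t) (h₂ x.2 (t + x.1))
          + cross (-k₂ x.2 (t - x.1)) (h₁ x.2 t))
        ((continuous_cross (comp ck₁ (by fun_prop) (by fun_prop))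
        (comp ch₂ (by fun_prop) (by fun_prop))).add
        (continuous_cross (comp ck₂ (by fun_prop) (by fun_prop)).neg
          (comp ch₁ (by fun_prop) (by fun_prop)))))
      (fun δ _ s => dRin δ s)
  have e := ((dQ b).sub (dQ a)).unique (dR.congr_of_eventuallyEq
    (Filter.Eventually.of_forall fun δ => key δ))
  rw [e]
  congr 1
  ext s
  congr 1
  ext t
  simp [cross]
  ring

/-! ### The calibration inequality on closed subannuli -/

/-- A map `f` of the cylinder `ℝ × (ℝ / 2π)` that is `C¹` over `(a, b)`, together with its partial
derivatives `f₁` (radial) and `f₂` (angular), all of them continuous up to and beyond the ends. -/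
structure Cyl (a b : ℝ) (f f₁ f₂ : ℝ → ℝ → ℂ) : Prop where
  c : Continuous (Function.uncurry f)
  c₁ : Continuous (Function.uncurry f₁)
  c₂ : Continuous (Function.uncurry f₂)
  d₁ : ∀ s ∈ Ioo a b, ∀ t, HasDerivAt (fun x => f x t) (f₁ s t) s
  d₂ : ∀ s t, HasDerivAt (f s) (f₂ s t) t
  per : ∀ s, Function.Periodic (f s) (2 * Real.pi)
  per₁ : ∀ s, Function.Periodic (f₁ s) (2 * Real.pi)

/-- The integral `∫ g(|f|²) dφ` over the circle of radius `s`, where `φ` is the argument of `f`.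
For `g = id` it is twice the signed area enclosed by the image of the circle, and for `g = 1` it
is `2π` times the winding number. -/
noncomputable def angInt (f f₂ : ℝ → ℝ → ℂ) (g : ℝ → ℝ) (s : ℝ) : ℝ :=
  ∫ t in (-Real.pi)..Real.pi, g (‖f s t‖ ^ 2) / ‖f s t‖ ^ 2 * cross (f s t) (f₂ s t)

/-- The one-form `g(ρ²) dφ` has exterior derivative `2 g'(ρ²) dx ∧ dy`. -/
lemma Cyl.angInt_sub {a b : ℝ} {f f₁ f₂ : ℝ → ℝ → ℂ} (F : Cyl a b f f₁ f₂) (hab : a ≤ b)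
    (hne : ∀ s t, f s t ≠ 0) {g κ : ℝ → ℝ} (hg : ∀ u, HasDerivAt g (κ u) u)
    (hκ : Continuous κ) :
    angInt f f₂ g b - angInt f f₂ g a = ∫ s in a..b, ∫ t in (-Real.pi)..Real.pi,
      2 * κ (‖f s t‖ ^ 2) * cross (f₁ s t) (f₂ s t) := by
  have hgc : Continuous g := continuous_iff_continuousAt.2 fun t => (hg t).continuousAt
  have hn : ∀ s t, ‖f s t‖ ^ 2 ≠ 0 := fun s t => by simpa using hne s t
  have cf := F.c
  have cf₁ := F.c₁
  have cf₂ := F.c₂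
  have cn : Continuous fun x : ℝ × ℝ => ‖Function.uncurry f x‖ ^ 2 := by fun_prop
  have hn' : ∀ x : ℝ × ℝ, ‖Function.uncurry f x‖ ^ 2 ≠ 0 := fun x => hn x.1 x.2
  have cγ : Continuous fun x : ℝ × ℝ =>
      ((g (‖Function.uncurry f x‖ ^ 2) / ‖Function.uncurry f x‖ ^ 2 : ℝ) : ℂ) :=
    Complex.continuous_ofReal.comp ((hgc.comp cn).div cn hn')
  have cγ' : ∀ {v : ℝ → ℝ → ℂ}, Continuous (Function.uncurry v) → Continuous fun x : ℝ × ℝ =>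
      (((κ (‖Function.uncurry f x‖ ^ 2) * ‖Function.uncurry f x‖ ^ 2
        - g (‖Function.uncurry f x‖ ^ 2)) / (‖Function.uncurry f x‖ ^ 2) ^ 2
        * (2 * ((Function.uncurry f x).re * (Function.uncurry v x).re
          + (Function.uncurry f x).im * (Function.uncurry v x).im)) : ℝ) : ℂ)
        * Function.uncurry f x := by
    intro v hv
    have c1 : Continuous fun x : ℝ × ℝ => (κ (‖Function.uncurry f x‖ ^ 2)
        * ‖Function.uncurry f x‖ ^ 2 - g (‖Function.uncurry f x‖ ^ 2))
        / (‖Function.uncurry f x‖ ^ 2) ^ 2 :=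
      (((hκ.comp cn).mul cn).sub (hgc.comp cn)).div (cn.pow 2) fun x => pow_ne_zero 2 (hn' x)
    fun_prop
  -- derivative of `γ(|f|²) f` with `γ u = g u / u` along a curve
  have hder : ∀ (u : ℝ → ℂ) (u' : ℂ) (x : ℝ), ‖u x‖ ^ 2 ≠ 0 → HasDerivAt u u' x →
      HasDerivAt (fun y => ((g (‖u y‖ ^ 2) / ‖u y‖ ^ 2 : ℝ) : ℂ) * u y)
        ((((κ (‖u x‖ ^ 2) * ‖u x‖ ^ 2 - g (‖u x‖ ^ 2)) / (‖u x‖ ^ 2) ^ 2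
            * (2 * ((u x).re * u'.re + (u x).im * u'.im)) : ℝ) : ℂ) * u x
          + ((g (‖u x‖ ^ 2) / ‖u x‖ ^ 2 : ℝ) : ℂ) * u') x := by
    intro u u' x hx hu
    have h1 := hasDerivAt_norm_sq hu
    have h2 := ((hg (‖u x‖ ^ 2)).comp x h1).div h1 hx
    refine (h2.ofReal_comp.mul hu).congr_deriv ?_
    congr 3
    simp only [Function.comp]
    ring
  have G := green hab (k := fun s t => ((g (‖f s t‖ ^ 2) / ‖f s t‖ ^ 2 : ℝ) : ℂ) * f s t)
    (k₁ := fun s t => (((κ (‖f s t‖ ^ 2) * ‖f s t‖ ^ 2 - g (‖f s t‖ ^ 2)) / (‖f s t‖ ^ 2) ^ 2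
            * (2 * ((f s t).re * (f₁ s t).re + (f s t).im * (f₁ s t).im)) : ℝ) : ℂ) * f s t
          + ((g (‖f s t‖ ^ 2) / ‖f s t‖ ^ 2 : ℝ) : ℂ) * f₁ s t)
    (k₂ := fun s t => (((κ (‖f s t‖ ^ 2) * ‖f s t‖ ^ 2 - g (‖f s t‖ ^ 2)) / (‖f s t‖ ^ 2) ^ 2
            * (2 * ((f s t).re * (f₂ s t).re + (f s t).im * (f₂ s t).im)) : ℝ) : ℂ) * f s t
          + ((g (‖f s t‖ ^ 2) / ‖f s t‖ ^ 2 : ℝ) : ℂ) * f₂ s t)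
    (h := f) (h₁ := f₁) (h₂ := f₂)
    (cγ.mul cf) ((cγ' cf₁).add (cγ.mul cf₁)) ((cγ' cf₂).add (cγ.mul cf₂))
    cf cf₁ cf₂ (fun s hs t => hder (fun x => f x t) _ s (hn s t) (F.d₁ s hs t))
    (fun s t => hder (f s) _ t (hn s t) (F.d₂ s t)) F.d₁ F.d₂
    (fun s t => by simp only [F.per s t]) F.per₁
  have e1 : ∀ s, (∫ t in (-Real.pi)..Real.pi,
      cross (((g (‖f s t‖ ^ 2) / ‖f s t‖ ^ 2 : ℝ) : ℂ) * f s t) (f₂ s t)) = angInt f f₂ g s := by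
    intro s
    unfold angInt
    congr 1
    ext t
    simp only [cross, Complex.re_ofReal_mul, Complex.im_ofReal_mul]
    ring
  rw [e1, e1] at G
  rw [G]
  congr 1
  ext s
  congr 1
  ext t
  have hns : ‖f s t‖ ^ 2 = (f s t).re ^ 2 + (f s t).im ^ 2 := by
    rw [Complex.sq_norm, Complex.normSq_apply]
    ring
  have hne' := hn s t
  generalize hγ : g (‖f s t‖ ^ 2) = γ
  generalize hκ' : κ (‖f s t‖ ^ 2) = μ
  rw [hns] at hne' ⊢
  simp only [cross, Complex.re_ofReal_mul, Complex.im_ofReal_mul, Complex.add_re, Complex.add_im]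
  field_simp
  ring

/-- The lower bound over a closed subannulus. The integrand equals the derivative of
`p |f|² - w · cross f f₂`, up to a complete square and the multiple `(λ² - w²) / (s λ)` of the
isoperimetric deficit. -/
lemma Cyl.core {a b : ℝ} {f f₁ f₂ : ℝ → ℝ → ℂ} (F : Cyl a b f f₁ f₂) (ha : 0 < a) (hab : a ≤ b)
    (hne : ∀ s t, f s t ≠ 0) {lam p w : ℝ → ℝ} (cl : ContinuousOn lam (Icc a b))
    (cp : ContinuousOn p (Icc a b)) (cw : ContinuousOn w (Icc a b))
    (hl : ∀ s ∈ Icc a b, 0 < lam s)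
    (hp : ∀ s ∈ Ioo a b, HasDerivAt p (-p s ^ 2 / (s * lam s)) s)
    (hw : ∀ s ∈ Ioo a b, HasDerivAt w
      ((-lam s ^ 2 - 2 * p s * w s + w s ^ 2) / (s * lam s)) s)
    (hwl : ∀ s ∈ Icc a b, w s ^ 2 ≤ lam s ^ 2) :
    (p b * (∫ t in (-Real.pi)..Real.pi, ‖f b t‖ ^ 2) - w b * angInt f f₂ id b)
      - (p a * (∫ t in (-Real.pi)..Real.pi, ‖f a t‖ ^ 2) - w a * angInt f f₂ id a)
    ≤ ∫ s in a..b, ∫ t in (-Real.pi)..Real.pi,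
        (s * lam s * ‖f₁ s t‖ ^ 2 + lam s / s * ‖f₂ s t‖ ^ 2) := by
  have cf := F.c
  have cf₁ := F.c₁
  have cf₂ := F.c₂
  have sl : ∀ {u : ℝ → ℝ → ℂ} (s : ℝ), Continuous (Function.uncurry u) → Continuous (u s) :=
    fun s hu => hu.comp (by fun_prop : Continuous fun t => (s, t))
  set B : ℝ → ℝ := fun s => ∫ t in (-Real.pi)..Real.pi, ‖f s t‖ ^ 2 with hB
  set P : ℝ → ℝ := angInt f f₂ id with hP
  set B' : ℝ → ℝ := fun s => ∫ t in (-Real.pi)..Real.pi,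
    2 * ((f s t).re * (f₁ s t).re + (f s t).im * (f₁ s t).im) with hB'
  set j : ℝ → ℝ := fun s => ∫ t in (-Real.pi)..Real.pi, 2 * cross (f₁ s t) (f₂ s t) with hj
  have cB0 : Continuous (Function.uncurry fun s t => ‖f s t‖ ^ 2) :=
    (by fun_prop : Continuous fun x : ℝ × ℝ => ‖Function.uncurry f x‖ ^ 2)
  have cB'0 : Continuous (Function.uncurry fun s t =>
      2 * ((f s t).re * (f₁ s t).re + (f s t).im * (f₁ s t).im)) :=
    (by fun_prop : Continuous fun x : ℝ × ℝ =>
      2 * ((Function.uncurry f x).re * (Function.uncurry f₁ x).re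
        + (Function.uncurry f x).im * (Function.uncurry f₁ x).im))
  have cj : Continuous j := continuous_param
    (continuous_const.mul (continuous_cross cf₁ cf₂) :
      Continuous (Function.uncurry fun s t => 2 * cross (f₁ s t) (f₂ s t)))
  have cB : Continuous B := continuous_param cB0
  have cB' : Continuous B' := continuous_param cB'0
  have hPeq : ∀ s, P s = ∫ t in (-Real.pi)..Real.pi, cross (f s t) (f₂ s t) := by
    intro s
    simp only [hP, angInt, id]
    congr 1
    ext t
    rw [div_self (by simpa using hne s t), one_mul]
  have cP : Continuous P := by
    rw [show P = fun s => ∫ t in (-Real.pi)..Real.pi, cross (f s t) (f₂ s t) from funext hPeq]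
    exact continuous_param (continuous_cross cf cf₂)
  have dB : ∀ s ∈ Ioo a b, HasDerivAt B (B' s) s := fun s hs =>
    hasDerivAt_param (Ioo_mem_nhds hs.1 hs.2) cB0 cB'0 fun x hx t =>
      hasDerivAt_norm_sq (F.d₁ x hx t)
  have dP : ∀ s ∈ Ioo a b, HasDerivAt P (j s) s := by
    intro s hs
    have hd : HasDerivAt (fun x => P a + ∫ y in a..x, j y) (j s) s :=
      (intervalIntegral.integral_hasDerivAt_right (cj.intervalIntegrable _ _)
        (cj.stronglyMeasurableAtFilter _ _) cj.continuousAt).const_add _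
    refine hd.congr_of_eventuallyEq ?_
    filter_upwards [Ioo_mem_nhds hs.1 hs.2] with x hx
    have F' : Cyl a x f f₁ f₂ :=
      ⟨F.c, F.c₁, F.c₂, fun y hy => F.d₁ y ⟨hy.1, hy.2.trans hx.2⟩, F.d₂, F.per, F.per₁⟩
    have := F'.angInt_sub hx.1.le hne (g := id) (κ := fun _ => 1) (fun u => hasDerivAt_id u)
      continuous_const
    simp only [mul_one] at this
    rw [← this]
    ring
  have cs : ∀ s ∈ Icc a b, s * lam s ≠ 0 := fun s hs =>
    (mul_pos (ha.trans_le hs.1) (hl s hs)).ne'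
  have cid : ContinuousOn (fun s : ℝ => s) (Icc a b) := continuousOn_id
  have cE1 : Continuous fun s => ∫ t in (-Real.pi)..Real.pi, ‖f₁ s t‖ ^ 2 :=
    continuous_param (by fun_prop : Continuous fun x : ℝ × ℝ => ‖Function.uncurry f₁ x‖ ^ 2)
  have cE2 : Continuous fun s => ∫ t in (-Real.pi)..Real.pi, ‖f₂ s t‖ ^ 2 :=
    continuous_param (by fun_prop : Continuous fun x : ℝ × ℝ => ‖Function.uncurry f₂ x‖ ^ 2)
  have Eeq : ∀ s, (∫ t in (-Real.pi)..Real.pi,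
        (s * lam s * ‖f₁ s t‖ ^ 2 + lam s / s * ‖f₂ s t‖ ^ 2))
      = s * lam s * (∫ t in (-Real.pi)..Real.pi, ‖f₁ s t‖ ^ 2)
        + lam s / s * ∫ t in (-Real.pi)..Real.pi, ‖f₂ s t‖ ^ 2 := by
    intro s
    have := sl s cf₁
    have := sl s cf₂
    rw [intervalIntegral.integral_add, intervalIntegral.integral_const_mul,
      intervalIntegral.integral_const_mul]
    all_goals exact Continuous.intervalIntegrable (by fun_prop) _ _
  set q' : ℝ → ℝ := fun s => (-p s ^ 2 / (s * lam s) * B s + p s * B' s)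
      - ((-lam s ^ 2 - 2 * p s * w s + w s ^ 2) / (s * lam s) * P s + w s * j s) with hq'
  have cq' : ContinuousOn q' (Icc a b) := by
    have h1 := cB.continuousOn (s := Icc a b)
    have h2 := cB'.continuousOn (s := Icc a b)
    have h3 := cP.continuousOn (s := Icc a b)
    have h4 := cj.continuousOn (s := Icc a b)
    have h5 := cid.mul cl
    exact ((((cp.pow 2).neg.div h5 cs).mul h1).add (cp.mul h2)).sub
      ((((((cl.pow 2).neg.sub ((continuousOn_const.mul cp).mul cw)).add (cw.pow 2)).div h5 cs).mul
        h3).add (cw.mul h4))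
  have cE : ContinuousOn (fun s => ∫ t in (-Real.pi)..Real.pi,
      (s * lam s * ‖f₁ s t‖ ^ 2 + lam s / s * ‖f₂ s t‖ ^ 2)) (Icc a b) := by
    simp only [Eeq]
    exact ((cid.mul cl).mul cE1.continuousOn).add ((cl.div cid fun s hs =>
      (ha.trans_le hs.1).ne').mul cE2.continuousOn)
  have huI : uIcc a b = Icc a b := uIcc_of_le hab
  have ftc := intervalIntegral.integral_eq_sub_of_hasDerivAt_of_le hab
    (f := fun s => p s * B s - w s * P s) (f' := q')
    ((cp.mul cB.continuousOn).sub (cw.mul cP.continuousOn))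
    (fun s hs => ((hp s hs).mul (dB s hs)).sub ((hw s hs).mul (dP s hs)))
    (ContinuousOn.intervalIntegrable (by rwa [huI]))
  rw [← ftc]
  refine intervalIntegral.integral_mono_on hab (ContinuousOn.intervalIntegrable (by rwa [huI]))
    (ContinuousOn.intervalIntegrable (by rwa [huI])) fun s hs => ?_
  have hs0 : 0 < s := ha.trans_le hs.1
  have hl0 := hl s hs
  have iso := isoperimetric (F.d₂ s) (sl s cf₂) (by
    have := F.per s (-Real.pi)
    rwa [show -Real.pi + 2 * Real.pi = Real.pi by ring] at this)
  rw [← hPeq] at iso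
  -- integrate the pointwise inequality, in which the deficit is still present
  have pw : (-p s ^ 2 / (s * lam s) * B s + p s * B' s)
      - ((-lam s ^ 2 - 2 * p s * w s + w s ^ 2) / (s * lam s) * P s + w s * j s)
      + (lam s ^ 2 - w s ^ 2) / (s * lam s) *
        ((∫ t in (-Real.pi)..Real.pi, ‖f₂ s t‖ ^ 2) - P s)
      ≤ ∫ t in (-Real.pi)..Real.pi,
        (s * lam s * ‖f₁ s t‖ ^ 2 + lam s / s * ‖f₂ s t‖ ^ 2) := by
    have k0 := sl s cf
    have k1 := sl s cf₁
    have k2 := sl s cf₂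
    have ii : ∀ {u : ℝ → ℝ}, Continuous u → IntervalIntegrable u volume (-Real.pi) Real.pi :=
      fun hu => hu.intervalIntegrable _ _
    have i0 : IntervalIntegrable (fun t => ‖f s t‖ ^ 2) volume (-Real.pi) Real.pi :=
      ii (by fun_prop)
    have i1 : IntervalIntegrable (fun t => 2 * ((f s t).re * (f₁ s t).re
      + (f s t).im * (f₁ s t).im)) volume (-Real.pi) Real.pi := ii (by fun_prop)
    have i2 : IntervalIntegrable (fun t => cross (f s t) (f₂ s t)) volume (-Real.pi) Real.pi :=
      ii (continuous_cross k0 k2)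
    have i3 : IntervalIntegrable (fun t => 2 * cross (f₁ s t) (f₂ s t)) volume
      (-Real.pi) Real.pi := ii (continuous_const.mul (continuous_cross k1 k2))
    have i4 : IntervalIntegrable (fun t => ‖f₂ s t‖ ^ 2) volume (-Real.pi) Real.pi :=
      ii (by fun_prop)
    rw [hPeq s, hB, hB', hj]
    simp only
    rw [← intervalIntegral.integral_sub i4 i2]
    simp only [← intervalIntegral.integral_const_mul]
    rw [← intervalIntegral.integral_add (i0.const_mul _) (i1.const_mul _),
      ← intervalIntegral.integral_add (i2.const_mul _) (i3.const_mul _),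
      ← intervalIntegral.integral_sub ((i0.const_mul _).add (i1.const_mul _))
        ((i2.const_mul _).add (i3.const_mul _)),
      ← intervalIntegral.integral_add (((i0.const_mul _).add (i1.const_mul _)).sub
        ((i2.const_mul _).add (i3.const_mul _))) ((i4.sub i2).const_mul _)]
    refine intervalIntegral.integral_mono (by linarith [Real.pi_pos])
      ((((i0.const_mul _).add (i1.const_mul _)).sub
        ((i2.const_mul _).add (i3.const_mul _))).add ((i4.sub i2).const_mul _))
      (ii (by fun_prop)) fun t => ?_
    simp only [Complex.sq_norm, Complex.normSq_apply, cross]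
    set x := (f s t).re
    set y := (f s t).im
    set x₁ := (f₁ s t).re
    set y₁ := (f₁ s t).im
    set x₂ := (f₂ s t).re
    set y₂ := (f₂ s t).im
    -- the square is `|s λ f₁ - p f - i w f₂|² / (s λ)`
    have hsq : 0 ≤ ((s * lam s * x₁ - p s * x + w s * y₂) ^ 2
        + (s * lam s * y₁ - p s * y - w s * x₂) ^ 2) / (s * lam s) := by positivity
    rw [← sub_nonneg]
    convert hsq using 1
    field_simp
    ring
  have hdef : 0 ≤ (lam s ^ 2 - w s ^ 2) / (s * lam s) *
      ((∫ t in (-Real.pi)..Real.pi, ‖f₂ s t‖ ^ 2) - P s) :=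
    mul_nonneg (div_nonneg (sub_nonneg.2 (hwl s hs)) (by positivity)) (sub_nonneg.2 iso)
  simp only [hq']
  linarith

/-! ### Exhaustion of the open annulus -/

/-- An orientation-preserving `C¹` map of the open annulus `r < |z| < R` into `rs < |w| < Rs`,
written in polar coordinates of the source, which extends continuously to the boundary circles
and whose Jacobian has the area of the target as its integral. -/
structure OCyl (r R rs Rs : ℝ) (f f₁ f₂ : ℝ → ℝ → ℂ) : Prop where
  hr : 0 < r
  hrR : r < R
  hrs : 0 < rs
  hrsRs : rs < Rs
  c : ContinuousOn (Function.uncurry f) (Icc r R ×ˢ univ)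
  c₁ : ContinuousOn (Function.uncurry f₁) (Ioo r R ×ˢ univ)
  c₂ : ContinuousOn (Function.uncurry f₂) (Ioo r R ×ˢ univ)
  d₁ : ∀ s ∈ Ioo r R, ∀ t, HasDerivAt (fun x => f x t) (f₁ s t) s
  d₂ : ∀ s ∈ Ioo r R, ∀ t, HasDerivAt (f s) (f₂ s t) t
  per : ∀ s, Function.Periodic (f s) (2 * Real.pi)
  per₁ : ∀ s, Function.Periodic (f₁ s) (2 * Real.pi)
  lo : ∀ s ∈ Ioo r R, ∀ t, rs < ‖f s t‖
  hi : ∀ s ∈ Ioo r R, ∀ t, ‖f s t‖ < Rs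
  inner : ∀ t, ‖f r t‖ = rs
  outer : ∀ t, ‖f R t‖ = Rs
  jac : ∀ s ∈ Ioo r R, ∀ t, 0 ≤ cross (f₁ s t) (f₂ s t)
  int : IntervalIntegrable (fun s => ∫ t in (-Real.pi)..Real.pi, cross (f₁ s t) (f₂ s t))
    volume r R
  area : ∫ s in r..R, ∫ t in (-Real.pi)..Real.pi, cross (f₁ s t) (f₂ s t)
    = Real.pi * (Rs ^ 2 - rs ^ 2)

/-- The projection of the real line onto `[a, b]`. -/
noncomputable def clamp (a b s : ℝ) : ℝ := max a (min s b)

lemma continuous_clamp (a b : ℝ) : Continuous (clamp a b) := by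
  unfold clamp
  fun_prop

lemma clamp_mem {a b : ℝ} (hab : a ≤ b) (s : ℝ) : clamp a b s ∈ Icc a b :=
  ⟨le_max_left _ _, max_le hab (min_le_right _ _)⟩

lemma clamp_eq {a b s : ℝ} (hs : s ∈ Icc a b) : clamp a b s = s := by
  rw [clamp, min_eq_left hs.2, max_eq_right hs.1]

lemma continuous_uncurry_clamp {a b : ℝ} (hab : a ≤ b) {S : Set ℝ} (hS : Icc a b ⊆ S)
    {u : ℝ → ℝ → ℂ} (hu : ContinuousOn (Function.uncurry u) (S ×ˢ univ)) :
    Continuous (Function.uncurry fun s t => u (clamp a b s) t) := by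
  have := continuous_clamp a b
  exact hu.comp_continuous (f := fun x : ℝ × ℝ => (clamp a b x.1, x.2)) (by fun_prop)
    fun x => ⟨hS (clamp_mem hab _), mem_univ _⟩

/-- A cutoff: `g` vanishes above `c₁` and equals `u - c` below `c₀`, with slope in `[0, 1]`. -/
lemma exists_cutoff {c₀ c₁ : ℝ} (h : c₀ < c₁) : ∃ (g κ : ℝ → ℝ) (c : ℝ), Continuous κ ∧
    (∀ u, HasDerivAt g (κ u) u) ∧ (∀ u, 0 ≤ κ u) ∧ (∀ u, κ u ≤ 1) ∧ c₀ ≤ c ∧ c ≤ c₁ ∧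
    (∀ u, c₁ ≤ u → g u = 0) ∧ ∀ u, u ≤ c₀ → g u = u - c := by
  set κ : ℝ → ℝ := fun u => max 0 (min 1 ((c₁ - u) / (c₁ - c₀))) with hκ
  have hpos : 0 < c₁ - c₀ := sub_pos.2 h
  have hc : Continuous κ := by fun_prop
  have k0 : ∀ u, 0 ≤ κ u := fun u => le_max_left _ _
  have k1 : ∀ u, κ u ≤ 1 := fun u => max_le zero_le_one (min_le_left _ _)
  have ii : ∀ x y, IntervalIntegrable κ volume x y := fun x y => hc.intervalIntegrable x y
  set g : ℝ → ℝ := fun u => ∫ x in c₁..u, κ x with hg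
  have hgc₀ : g c₀ = -∫ x in c₀..c₁, κ x := intervalIntegral.integral_symm _ _
  have b0 : 0 ≤ ∫ x in c₀..c₁, κ x := intervalIntegral.integral_nonneg h.le fun u _ => k0 u
  have b1 : ∫ x in c₀..c₁, κ x ≤ c₁ - c₀ := by
    have := intervalIntegral.integral_mono h.le (ii c₀ c₁)
      (intervalIntegrable_const (c := (1 : ℝ))) k1
    simpa using this
  refine ⟨g, κ, c₀ - g c₀, hc, fun u => intervalIntegral.integral_hasDerivAt_right (ii _ _)
    (hc.stronglyMeasurableAtFilter _ _) hc.continuousAt, k0, k1, by linarith, by linarith,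
    fun u hu => ?_, fun u hu => ?_⟩
  · have : ∫ x in c₁..u, κ x = ∫ x in c₁..u, (0 : ℝ) := by
      refine intervalIntegral.integral_congr fun x hx => ?_
      rw [uIcc_of_le hu] at hx
      exact max_eq_left ((min_le_right _ _).trans
        (div_nonpos_of_nonpos_of_nonneg (by linarith [hx.1]) hpos.le))
    simp [hg, this]
  · have e1 : g u = g c₀ + ∫ x in c₀..u, κ x :=
      (intervalIntegral.integral_add_adjacent_intervals (ii _ _) (ii _ _)).symm
    have e2 : ∫ x in c₀..u, κ x = ∫ x in c₀..u, (1 : ℝ) := by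
      refine intervalIntegral.integral_congr fun x hx => ?_
      rw [uIcc_of_ge hu] at hx
      have : 1 ≤ (c₁ - x) / (c₁ - c₀) := by
        rw [le_div_iff₀ hpos]
        linarith [hx.2]
      simp only [hκ, min_eq_left this]
      exact max_eq_right zero_le_one
    rw [e1, e2]
    simp
    ring

namespace OCyl

variable {r R rs Rs : ℝ} {f f₁ f₂ : ℝ → ℝ → ℂ}

lemma toCyl (F : OCyl r R rs Rs f f₁ f₂) {a b : ℝ} (ha : r < a) (hab : a ≤ b) (hb : b < R) :
    Cyl a b (fun s t => f (clamp a b s) t) (fun s t => f₁ (clamp a b s) t)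
      (fun s t => f₂ (clamp a b s) t) where
  c := continuous_uncurry_clamp hab (Icc_subset_Icc ha.le hb.le) F.c
  c₁ := continuous_uncurry_clamp hab (Icc_subset_Ioo ha hb) F.c₁
  c₂ := continuous_uncurry_clamp hab (Icc_subset_Ioo ha hb) F.c₂
  d₁ := fun s hs t => by
    rw [clamp_eq (Ioo_subset_Icc_self hs)]
    refine (F.d₁ s ⟨ha.trans hs.1, hs.2.trans hb⟩ t).congr_of_eventuallyEq ?_
    filter_upwards [Ioo_mem_nhds hs.1 hs.2] with x hx
    rw [clamp_eq (Ioo_subset_Icc_self hx)]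
  d₂ := fun s t => F.d₂ _ (Icc_subset_Ioo ha hb (clamp_mem hab s)) t
  per := fun s => F.per _
  per₁ := fun s => F.per₁ _

lemma ne_zero (F : OCyl r R rs Rs f f₁ f₂) {s : ℝ} (hs : s ∈ Ioo r R) (t : ℝ) : f s t ≠ 0 :=
  norm_pos_iff.1 (F.hrs.trans (F.lo s hs t))

lemma angInt_sub (F : OCyl r R rs Rs f f₁ f₂) {a b : ℝ} (ha : r < a) (hab : a ≤ b) (hb : b < R)
    {g κ : ℝ → ℝ} (hg : ∀ u, HasDerivAt g (κ u) u) (hκ : Continuous κ) :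
    angInt f f₂ g b - angInt f f₂ g a = ∫ s in a..b, ∫ t in (-Real.pi)..Real.pi,
      2 * κ (‖f s t‖ ^ 2) * cross (f₁ s t) (f₂ s t) := by
  have h := (F.toCyl ha hab hb).angInt_sub hab
    (fun s t => F.ne_zero (Icc_subset_Ioo ha hb (clamp_mem hab s)) t) hg hκ
  have ha' := clamp_eq (left_mem_Icc.2 hab)
  have hb' := clamp_eq (right_mem_Icc.2 hab)
  simp only [angInt, ha', hb'] at h ⊢
  rw [h]
  refine intervalIntegral.integral_congr fun s hs => ?_
  rw [uIcc_of_le hab] at hs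
  simp only [clamp_eq hs]

lemma continuous_slice {u : ℝ → ℝ → ℂ} {S : Set ℝ}
    (hu : ContinuousOn (Function.uncurry u) (S ×ˢ univ)) {s : ℝ} (hs : s ∈ S) :
    Continuous (u s) :=
  hu.comp_continuous (f := fun t => (s, t)) (by fun_prop) fun t => ⟨hs, mem_univ t⟩

/-- If the slope of `g` lies in `[0, 1]`, the increments of `∫ g(|f|²) dφ` are dominated by those
of twice the enclosed area, because the Jacobian is nonnegative. -/
lemma angInt_sub_mem (F : OCyl r R rs Rs f f₁ f₂) {a b : ℝ} (ha : r < a) (hab : a ≤ b)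
    (hb : b < R) {g κ : ℝ → ℝ} (hg : ∀ u, HasDerivAt g (κ u) u) (hκ : Continuous κ)
    (h0 : ∀ u, 0 ≤ κ u) (h1 : ∀ u, κ u ≤ 1) :
    0 ≤ angInt f f₂ g b - angInt f f₂ g a ∧
      angInt f f₂ g b - angInt f f₂ g a ≤ angInt f f₂ id b - angInt f f₂ id a := by
  have hpi : -Real.pi ≤ Real.pi := by linarith [Real.pi_pos]
  have key : ∀ {κ₁ κ₂ : ℝ → ℝ}, Continuous κ₁ → Continuous κ₂ → (∀ u, κ₁ u ≤ κ₂ u) →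
      (∫ s in a..b, ∫ t in (-Real.pi)..Real.pi, 2 * κ₁ (‖f s t‖ ^ 2) * cross (f₁ s t) (f₂ s t))
      ≤ ∫ s in a..b, ∫ t in (-Real.pi)..Real.pi,
        2 * κ₂ (‖f s t‖ ^ 2) * cross (f₁ s t) (f₂ s t) := by
    intro κ₁ κ₂ c1 c2 hle
    have G := F.toCyl ha hab hb
    have cont : ∀ {κ : ℝ → ℝ}, Continuous κ → Continuous (Function.uncurry fun s t =>
        2 * κ (‖f (clamp a b s) t‖ ^ 2)
          * cross (f₁ (clamp a b s) t) (f₂ (clamp a b s) t)) := fun hk =>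
      (continuous_const.mul (hk.comp (G.c.norm.pow 2))).mul (continuous_cross G.c₁ G.c₂)
    have con : ∀ {κ : ℝ → ℝ}, Continuous κ → IntervalIntegrable (fun s =>
        ∫ t in (-Real.pi)..Real.pi, 2 * κ (‖f s t‖ ^ 2) * cross (f₁ s t) (f₂ s t))
        volume a b := by
      intro κ hk
      refine ContinuousOn.intervalIntegrable ?_
      rw [uIcc_of_le hab]
      refine (continuous_param (a := -Real.pi) (b := Real.pi) (cont hk)).continuousOn.congr ?_
      intro s hs
      simp only [clamp_eq hs]
    refine intervalIntegral.integral_mono_on hab (con c1) (con c2) fun s hs => ?_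
    have hs' := Icc_subset_Ioo ha hb hs
    have e0 := continuous_slice F.c (Ioo_subset_Icc_self hs')
    have e1 := continuous_slice F.c₁ hs'
    have e2 := continuous_slice F.c₂ hs'
    have e3 := continuous_cross e1 e2
    refine intervalIntegral.integral_mono hpi (Continuous.intervalIntegrable (by fun_prop) _ _)
      (Continuous.intervalIntegrable (by fun_prop) _ _) fun t => ?_
    have := F.jac s hs' t
    have := hle (‖f s t‖ ^ 2)
    gcongr
  rw [F.angInt_sub ha hab hb hg hκ,
    F.angInt_sub ha hab hb (g := id) (κ := fun _ => 1) (fun u => hasDerivAt_id u) continuous_const]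
  refine ⟨?_, key hκ continuous_const h1⟩
  have := key (κ₁ := fun _ => 0) continuous_const hκ h0
  simpa using this

/-- The winding number of the image circles is constant. -/
lemma angInt_one (F : OCyl r R rs Rs f f₁ f₂) {a b : ℝ} (ha : a ∈ Ioo r R) (hb : b ∈ Ioo r R) :
    angInt f f₂ (fun _ => 1) a = angInt f f₂ (fun _ => 1) b := by
  wlog hab : a ≤ b generalizing a b
  · exact (this hb ha (le_of_not_ge hab)).symm
  have := F.angInt_sub ha.1 hab hb.2 (g := fun _ => 1) (κ := fun _ => 0)
    (fun u => hasDerivAt_const u 1) continuous_const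
  simp at this
  linarith

lemma angInt_affine (F : OCyl r R rs Rs f f₁ f₂) {s : ℝ} (hs : s ∈ Ioo r R) {g : ℝ → ℝ} {c : ℝ}
    (hg : ∀ t ∈ Icc (-Real.pi) Real.pi, g (‖f s t‖ ^ 2) = ‖f s t‖ ^ 2 - c) :
    angInt f f₂ g s = angInt f f₂ id s - c * angInt f f₂ (fun _ => 1) s := by
  have e0 := continuous_slice F.c (Ioo_subset_Icc_self hs)
  have e2 := continuous_cross e0 (continuous_slice F.c₂ hs)
  have hn : ∀ t, ‖f s t‖ ^ 2 ≠ 0 := fun t => by simpa using F.ne_zero hs t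
  have c1 : Continuous fun t => id (‖f s t‖ ^ 2) / ‖f s t‖ ^ 2 * cross (f s t) (f₂ s t) :=
    ((by fun_prop : Continuous fun t => id (‖f s t‖ ^ 2)).div (by fun_prop) hn).mul e2
  have c2 : Continuous fun t => 1 / ‖f s t‖ ^ 2 * cross (f s t) (f₂ s t) :=
    (continuous_const.div (by fun_prop) hn).mul e2
  unfold angInt
  rw [← intervalIntegral.integral_const_mul, ← intervalIntegral.integral_sub
    (c1.intervalIntegrable _ _) ((c2.intervalIntegrable _ _).const_mul c)]
  refine intervalIntegral.integral_congr fun t ht => ?_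
  rw [uIcc_of_le (by linarith [Real.pi_pos])] at ht
  simp only [hg t ht, id]
  have := hn t
  field_simp

lemma angInt_zero {s : ℝ} {g : ℝ → ℝ}
    (hg : ∀ t ∈ Icc (-Real.pi) Real.pi, g (‖f s t‖ ^ 2) = 0) : angInt f f₂ g s = 0 := by
  unfold angInt
  rw [intervalIntegral.integral_congr (g := fun _ => 0)]
  · simp
  · intro t ht
    rw [uIcc_of_le (by linarith [Real.pi_pos])] at ht
    simp [hg t ht]

lemma continuous_clamped (F : OCyl r R rs Rs f f₁ f₂) :
    Continuous (Function.uncurry fun s t => f (clamp r R s) t) :=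
  continuous_uncurry_clamp F.hrR.le subset_rfl F.c

lemma eventually_outer (F : OCyl r R rs Rs f f₁ f₂) {c : ℝ} (hc : c < Rs ^ 2) :
    ∀ᶠ s in nhdsWithin R (Iio R), ∀ t ∈ Icc (-Real.pi) Real.pi, c ≤ ‖f s t‖ ^ 2 := by
  have hcont : Continuous fun x : ℝ × ℝ => ‖f (clamp r R x.1) x.2‖ ^ 2 :=
    F.continuous_clamped.norm.pow 2
  have h := isCompact_Icc.eventually_forall_of_forall_eventually (x₀ := R)
    (K := Icc (-Real.pi) Real.pi) (P := fun s t => c < ‖f (clamp r R s) t‖ ^ 2) (fun t _ => by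
      refine hcont.continuousAt.eventually (lt_mem_nhds ?_)
      simp only [clamp_eq (right_mem_Icc.2 F.hrR.le), F.outer t, hc])
  filter_upwards [nhdsWithin_le_nhds h, Ioo_mem_nhdsLT F.hrR] with s hs hs' t ht
  have := hs t ht
  rw [clamp_eq (Ioo_subset_Icc_self hs')] at this
  exact this.le

lemma eventually_inner (F : OCyl r R rs Rs f f₁ f₂) {c : ℝ} (hc : rs ^ 2 < c) :
    ∀ᶠ s in nhdsWithin r (Ioi r), ∀ t ∈ Icc (-Real.pi) Real.pi, ‖f s t‖ ^ 2 ≤ c := by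
  have hcont : Continuous fun x : ℝ × ℝ => ‖f (clamp r R x.1) x.2‖ ^ 2 :=
    F.continuous_clamped.norm.pow 2
  have h := isCompact_Icc.eventually_forall_of_forall_eventually (x₀ := r)
    (K := Icc (-Real.pi) Real.pi) (P := fun s t => ‖f (clamp r R s) t‖ ^ 2 < c) (fun t _ => by
      refine hcont.continuousAt.eventually (gt_mem_nhds ?_)
      simp only [clamp_eq (left_mem_Icc.2 F.hrR.le), F.inner t, hc])
  filter_upwards [nhdsWithin_le_nhds h, Ioo_mem_nhdsGT F.hrR] with s hs hs' t ht
  have := hs t ht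
  rw [clamp_eq (Ioo_subset_Icc_self hs')] at this
  exact this.le

/-- The enclosed areas converge to the areas of the boundary discs. With `W` the constant angular
increment, comparison with cutoffs of `u ↦ u - c` traps `Rs² W` and `rs² W` between the enclosed
areas and their limits; the area of the target then forces `W = 2π`. -/
lemma tendsto_area (F : OCyl r R rs Rs f f₁ f₂) :
    Filter.Tendsto (angInt f f₂ id) (nhdsWithin r (Ioi r)) (nhds (2 * Real.pi * rs ^ 2)) ∧
    Filter.Tendsto (angInt f f₂ id) (nhdsWithin R (Iio R)) (nhds (2 * Real.pi * Rs ^ 2)) := by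
  set P := angInt f f₂ id with hP
  set j : ℝ → ℝ := fun s => ∫ t in (-Real.pi)..Real.pi, cross (f₁ s t) (f₂ s t) with hj
  obtain ⟨s₀, hs₀⟩ : (Ioo r R).Nonempty := nonempty_Ioo.2 F.hrR
  set W := angInt f f₂ (fun _ => 1) s₀ with hW
  have Pd : ∀ {a b}, r < a → a ≤ b → b < R → P b - P a = 2 * ∫ s in a..b, j s := by
    intro a b ha hab hb
    rw [hP, F.angInt_sub ha hab hb (g := id) (κ := fun _ => 1) (fun u => hasDerivAt_id u)
      continuous_const, ← intervalIntegral.integral_const_mul]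
    congr 1
    ext s
    rw [hj, ← intervalIntegral.integral_const_mul]
    simp
  have Pmono : ∀ {a b}, r < a → a ≤ b → b < R → P a ≤ P b := fun ha hab hb => by
    have := (F.angInt_sub_mem ha hab hb (g := id) (κ := fun _ => 1) (fun u => hasDerivAt_id u)
      continuous_const (fun _ => zero_le_one) (fun _ => le_rfl)).1
    linarith
  -- the continuous extension of the enclosed area to the closed interval
  set Q : ℝ → ℝ := fun s => P s₀ + 2 * ((∫ y in r..s, j y) - ∫ y in r..s₀, j y) with hQ
  have sub : ∀ {a b}, a ∈ Icc r R → b ∈ Icc r R → IntervalIntegrable j volume a b :=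
    fun ha hb => F.int.mono_set (uIcc_subset_uIcc (by rwa [uIcc_of_le F.hrR.le])
      (by rwa [uIcc_of_le F.hrR.le]))
  have lmem := left_mem_Icc.2 F.hrR.le
  have rmem := right_mem_Icc.2 F.hrR.le
  have PQ : ∀ s ∈ Ioo r R, P s = Q s := by
    intro s hs
    have e : (∫ y in r..s, j y) - ∫ y in r..s₀, j y = ∫ y in s₀..s, j y := by
      rw [sub_eq_iff_eq_add, add_comm]
      exact (intervalIntegral.integral_add_adjacent_intervals
        (sub lmem (Ioo_subset_Icc_self hs₀))
        (sub (Ioo_subset_Icc_self hs₀) (Ioo_subset_Icc_self hs))).symm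
    simp only [hQ, e]
    rcases le_total s₀ s with h | h
    · have := Pd hs₀.1 h hs.2
      linarith
    · have := Pd hs.1 h hs₀.2
      rw [intervalIntegral.integral_symm]
      linarith
  have Qc : ContinuousOn Q (Icc r R) := by
    have h1 := intervalIntegral.continuousOn_primitive_interval' F.int left_mem_uIcc
    rw [uIcc_of_le F.hrR.le] at h1
    exact continuousOn_const.add (continuousOn_const.mul (h1.sub continuousOn_const))
  have tR : Filter.Tendsto P (nhdsWithin R (Iio R)) (nhds (Q R)) := by
    have h1 : Filter.Tendsto Q (nhdsWithin R (Ioo r R)) (nhds (Q R)) :=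
      ((Qc R rmem).mono Ioo_subset_Icc_self).tendsto
    rw [nhdsWithin_Ioo_eq_nhdsLT F.hrR] at h1
    refine h1.congr' ?_
    filter_upwards [Ioo_mem_nhdsLT F.hrR] with s hs using (PQ s hs).symm
  have tr : Filter.Tendsto P (nhdsWithin r (Ioi r)) (nhds (Q r)) := by
    have h1 : Filter.Tendsto Q (nhdsWithin r (Ioo r R)) (nhds (Q r)) :=
      ((Qc r lmem).mono Ioo_subset_Icc_self).tendsto
    rw [nhdsWithin_Ioo_eq_nhdsGT F.hrR] at h1
    refine h1.congr' ?_
    filter_upwards [Ioo_mem_nhdsGT F.hrR] with s hs using (PQ s hs).symm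
  have leR : ∀ s ∈ Ioo r R, P s ≤ Q R := fun s hs => ge_of_tendsto tR (by
    filter_upwards [Ioo_mem_nhdsLT hs.2] with x hx using Pmono hs.1 hx.1.le hx.2)
  have ler : ∀ s ∈ Ioo r R, Q r ≤ P s := fun s hs => le_of_tendsto tr (by
    filter_upwards [Ioo_mem_nhdsGT hs.1] with x hx using Pmono hx.1 hx.2.le hs.2)
  have ext : ∀ s ∈ Ioo r R, ∃ m M, rs ^ 2 < m ∧ M < Rs ^ 2 ∧
      ∀ t ∈ Icc (-Real.pi) Real.pi, m ≤ ‖f s t‖ ^ 2 ∧ ‖f s t‖ ^ 2 ≤ M := by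
    intro s hs
    have hc : ContinuousOn (fun t => ‖f s t‖ ^ 2) (Icc (-Real.pi) Real.pi) :=
      ((continuous_slice F.c (Ioo_subset_Icc_self hs)).norm.pow 2).continuousOn
    have hne : (Icc (-Real.pi) Real.pi).Nonempty := nonempty_Icc.2 (by linarith [Real.pi_pos])
    obtain ⟨x, -, hx⟩ := isCompact_Icc.exists_isMinOn hne hc
    obtain ⟨y, -, hy⟩ := isCompact_Icc.exists_isMaxOn hne hc
    refine ⟨_, _, ?_, ?_, fun t ht => ⟨hx ht, hy ht⟩⟩
    · exact pow_lt_pow_left₀ (F.lo s hs x) F.hrs.le two_ne_zero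
    · exact pow_lt_pow_left₀ (F.hi s hs y) (norm_nonneg _) two_ne_zero
  have outer : ∀ s ∈ Ioo r R, P s ≤ Rs ^ 2 * W ∧ Rs ^ 2 * W ≤ Q R := by
    intro s hs
    obtain ⟨m, M, hm, hM, hmM⟩ := ext s hs
    have cW : Continuous fun c : ℝ => c * W := continuous_mul_const W
    have hcl : IsClosed {c : ℝ | P s ≤ c * W ∧ c * W ≤ Q R} :=
      (isClosed_le continuous_const cW).inter (isClosed_le cW continuous_const)
    refine hcl.closure_subset (Metric.mem_closure_iff.2 fun ε hε => ?_)
    obtain ⟨c₀, h0, h0'⟩ := exists_between (max_lt hM (sub_lt_self (Rs ^ 2) hε))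
    obtain ⟨c₁, h1, h1'⟩ := exists_between h0'
    obtain ⟨g, κ, c, hκ, hg, k0, k1, hc0, hc1, gz, ga⟩ := exists_cutoff h1
    obtain ⟨x, hx, hxs⟩ := ((F.eventually_outer h1').and (Ioo_mem_nhdsLT hs.2)).exists
    have hx' : x ∈ Ioo r R := ⟨hs.1.trans hxs.1, hxs.2⟩
    have i := F.angInt_sub_mem hs.1 hxs.1.le hxs.2 hg hκ k0 k1
    rw [angInt_zero (s := x) fun t ht => gz _ (hx t ht),
      F.angInt_affine hs (c := c) fun t ht => ga _ ((hmM t ht).2.trans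
        ((le_max_left _ _).trans h0.le)), F.angInt_one hs hs₀] at i
    have := leR x hx'
    refine ⟨c, ⟨by linarith [i.1], by linarith [i.2]⟩, ?_⟩
    rw [Real.dist_eq, abs_of_nonneg (by linarith)]
    linarith [le_max_right M (Rs ^ 2 - ε)]
  have inner : ∀ s ∈ Ioo r R, Q r ≤ rs ^ 2 * W ∧ rs ^ 2 * W ≤ P s := by
    intro s hs
    obtain ⟨m, M, hm, hM, hmM⟩ := ext s hs
    have cW : Continuous fun c : ℝ => c * W := continuous_mul_const W
    have hcl : IsClosed {c : ℝ | Q r ≤ c * W ∧ c * W ≤ P s} :=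
      (isClosed_le continuous_const cW).inter (isClosed_le cW continuous_const)
    refine hcl.closure_subset (Metric.mem_closure_iff.2 fun ε hε => ?_)
    obtain ⟨c₁, h1, h1'⟩ := exists_between (lt_min hm (lt_add_of_pos_right (rs ^ 2) hε))
    obtain ⟨c₀, h0, h0'⟩ := exists_between h1
    obtain ⟨g, κ, c, hκ, hg, k0, k1, hc0, hc1, gz, ga⟩ := exists_cutoff h0'
    obtain ⟨x, hx, hxs⟩ := ((F.eventually_inner h0).and (Ioo_mem_nhdsGT hs.1)).exists
    have hx' : x ∈ Ioo r R := ⟨hxs.1, hxs.2.trans hs.2⟩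
    -- the complementary cutoff vanishes below `c₀` and equals `u - c` above `c₁`
    have i := F.angInt_sub_mem hxs.1 hxs.2.le hs.2 (g := fun u => u - c - g u)
      (κ := fun u => 1 - κ u) (fun u => ((hasDerivAt_id u).sub_const c).sub (hg u))
      (continuous_const.sub hκ) (fun u => by linarith [k1 u]) (fun u => by linarith [k0 u])
    rw [angInt_zero (s := x) fun t ht => by rw [ga _ (hx t ht), sub_self],
      F.angInt_affine hs (c := c) fun t ht => by
        rw [gz _ (h1'.le.trans ((min_le_left _ _).trans (hmM t ht).1)), sub_zero],
      F.angInt_one hs hs₀] at i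
    have := ler x hx'
    refine ⟨c, ⟨by linarith [i.2], by linarith [i.1]⟩, ?_⟩
    rw [Real.dist_eq, abs_of_nonpos (by linarith)]
    linarith [min_le_right m (rs ^ 2 + ε)]
  have eR : Q R = Rs ^ 2 * W := le_antisymm (le_of_tendsto tR (by
    filter_upwards [Ioo_mem_nhdsLT F.hrR] with x hx using (outer x hx).1)) (outer s₀ hs₀).2
  have er : Q r = rs ^ 2 * W := le_antisymm (inner s₀ hs₀).1 (ge_of_tendsto tr (by
    filter_upwards [Ioo_mem_nhdsGT F.hrR] with x hx using (inner x hx).2))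
  have hdiff : Q R - Q r = 2 * (Real.pi * (Rs ^ 2 - rs ^ 2)) := by
    rw [← F.area]
    simp only [hQ, intervalIntegral.integral_same]
    ring
  have hpos : 0 < Rs ^ 2 - rs ^ 2 := by
    have := F.hrs
    have := F.hrsRs
    nlinarith
  have hW2 : W = 2 * Real.pi := by
    rw [eR, er] at hdiff
    have : (Rs ^ 2 - rs ^ 2) * W = (Rs ^ 2 - rs ^ 2) * (2 * Real.pi) := by linarith
    exact mul_left_cancel₀ hpos.ne' this
  rw [er, hW2] at tr
  rw [eR, hW2] at tR
  rw [mul_comm _ (rs ^ 2), mul_comm _ (Rs ^ 2)]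
  exact ⟨tr, tR⟩

/-- The energy bound, once a pair `(p, w)` with `p' = -p²/(sλ)`, `w' = (-λ² - 2pw + w²)/(sλ)` and
`|w| ≤ λ` is given. Energies over closed subannuli exhaust the total energy `E`. -/
lemma energy_bound (F : OCyl r R rs Rs f f₁ f₂) {lam p w : ℝ → ℝ}
    (cl : ContinuousOn lam (Icc r R)) (cp : ContinuousOn p (Icc r R))
    (cw : ContinuousOn w (Icc r R)) (hl : ∀ s ∈ Icc r R, 0 < lam s)
    (hp : ∀ s ∈ Ioo r R, HasDerivAt p (-p s ^ 2 / (s * lam s)) s)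
    (hw : ∀ s ∈ Ioo r R, HasDerivAt w
      ((-lam s ^ 2 - 2 * p s * w s + w s ^ 2) / (s * lam s)) s)
    (hwl : ∀ s ∈ Icc r R, w s ^ 2 ≤ lam s ^ 2) {E : ENNReal}
    (hE : ∀ a b, r < a → a ≤ b → b < R → ENNReal.ofReal (∫ s in a..b,
      ∫ t in (-Real.pi)..Real.pi,
        (s * lam s * ‖f₁ s t‖ ^ 2 + lam s / s * ‖f₂ s t‖ ^ 2)) ≤ E) :
    ENNReal.ofReal (2 * Real.pi * (Rs ^ 2 * (p R - w R) - rs ^ 2 * (p r - w r))) ≤ E := by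
  set B : ℝ → ℝ := fun s => ∫ t in (-Real.pi)..Real.pi, ‖f s t‖ ^ 2 with hB
  set P := angInt f f₂ id with hP
  have lmem := left_mem_Icc.2 F.hrR.le
  have rmem := right_mem_Icc.2 F.hrR.le
  have cB : ContinuousOn B (Icc r R) := by
    have hcont : Continuous fun x : ℝ × ℝ => ‖f (clamp r R x.1) x.2‖ ^ 2 :=
      F.continuous_clamped.norm.pow 2
    refine (continuous_param (a := -Real.pi) (b := Real.pi)
      (F := fun s t => ‖f (clamp r R s) t‖ ^ 2) hcont).continuousOn.congr fun s hs => ?_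
    simp only [clamp_eq hs, hB]
  have Br : B r = 2 * Real.pi * rs ^ 2 := by
    simp only [hB, F.inner, intervalIntegral.integral_const, smul_eq_mul]
    ring
  have BR : B R = 2 * Real.pi * Rs ^ 2 := by
    simp only [hB, F.outer, intervalIntegral.integral_const, smul_eq_mul]
    ring
  have tl : ∀ {u : ℝ → ℝ}, ContinuousOn u (Icc r R) →
      Filter.Tendsto u (nhdsWithin r (Ioi r)) (nhds (u r)) := fun {u} hu => by
    have h1 : Filter.Tendsto u (nhdsWithin r (Ioo r R)) (nhds (u r)) :=
      ((hu r lmem).mono Ioo_subset_Icc_self).tendsto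
    rwa [nhdsWithin_Ioo_eq_nhdsGT F.hrR] at h1
  have tR : ∀ {u : ℝ → ℝ}, ContinuousOn u (Icc r R) →
      Filter.Tendsto u (nhdsWithin R (Iio R)) (nhds (u R)) := fun {u} hu => by
    have h1 : Filter.Tendsto u (nhdsWithin R (Ioo r R)) (nhds (u R)) :=
      ((hu R rmem).mono Ioo_subset_Icc_self).tendsto
    rwa [nhdsWithin_Ioo_eq_nhdsLT F.hrR] at h1
  obtain ⟨Pl, PR⟩ := F.tendsto_area
  have q1 := ((tl cp).mul (tl cB)).sub ((tl cw).mul Pl)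
  have q2 := ((tR cp).mul (tR cB)).sub ((tR cw).mul PR)
  have q3 := (q2.comp Filter.tendsto_snd).sub (q1.comp (Filter.tendsto_fst
    (f := nhdsWithin r (Ioi r)) (g := nhdsWithin R (Iio R))))
  have q4 := ENNReal.tendsto_ofReal q3
  rw [Br, BR, show p R * (2 * Real.pi * Rs ^ 2) - w R * (2 * Real.pi * Rs ^ 2)
      - (p r * (2 * Real.pi * rs ^ 2) - w r * (2 * Real.pi * rs ^ 2))
      = 2 * Real.pi * (Rs ^ 2 * (p R - w R) - rs ^ 2 * (p r - w r)) by ring] at q4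
  refine le_of_tendsto q4 ?_
  obtain ⟨s₀, hs₀⟩ : (Ioo r R).Nonempty := nonempty_Ioo.2 F.hrR
  filter_upwards [Filter.prod_mem_prod (Ioo_mem_nhdsGT hs₀.1) (Ioo_mem_nhdsLT hs₀.2)] with x hx
  obtain ⟨⟨ha, ha'⟩, hb', hb⟩ := hx
  have hab : x.1 ≤ x.2 := (ha'.trans hb').le
  refine le_trans (ENNReal.ofReal_le_ofReal ?_) (hE x.1 x.2 ha hab hb)
  have hsub : Icc x.1 x.2 ⊆ Icc r R := Icc_subset_Icc ha.le hb.le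
  have hsubo : Ioo x.1 x.2 ⊆ Ioo r R := Ioo_subset_Ioo ha.le hb.le
  have core := (F.toCyl ha hab hb).core (F.hr.trans ha) hab
    (fun s t => F.ne_zero (Icc_subset_Ioo ha hb (clamp_mem hab s)) t) (cl.mono hsub)
    (cp.mono hsub) (cw.mono hsub) (fun s hs => hl s (hsub hs)) (fun s hs => hp s (hsubo hs))
    (fun s hs => hw s (hsubo hs)) (fun s hs => hwl s (hsub hs))
  have ha' := clamp_eq (left_mem_Icc.2 hab)
  have hb' := clamp_eq (right_mem_Icc.2 hab)
  simp only [angInt, ha', hb'] at core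
  refine core.trans (le_of_eq (intervalIntegral.integral_congr fun s hs => ?_))
  rw [uIcc_of_le hab] at hs
  simp only [clamp_eq hs]

end OCyl

/-! ### The auxiliary pair -/

/-- The auxiliary pair `(p, w)`. Here `p` solves `p' = -p²/(sλ)` with initial value
`max (Φ(r) - λ(r)) 0`, and `w = p - Φ`. Comparing `p` with `Φ` gives `w ≤ 0`. Comparing `Φ` with
`p + λ(s)` on `[r, s]`, where the weight is at most `λ(s)` by monotonicity, gives `-λ ≤ w`. -/
lemma exists_pair {r R : ℝ} (hr : 0 < r) (hrR : r < R) {lam Φ Φ' : ℝ → ℝ}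
    (hlamc : ContinuousOn lam (Icc r R)) (hlampos : ∀ s ∈ Icc r R, 0 < lam s)
    (hlammono : MonotoneOn lam (Icc r R))
    (hΦd : ∀ s ∈ Icc r R, HasDerivWithinAt Φ (Φ' s) (Icc r R) s)
    (hΦode : ∀ s ∈ Icc r R, s * lam s * Φ' s = lam s ^ 2 - Φ s ^ 2)
    (hΦnn : ∀ s ∈ Icc r R, 0 ≤ Φ s) :
    ∃ p w : ℝ → ℝ, ContinuousOn p (Icc r R) ∧ ContinuousOn w (Icc r R) ∧
      (∀ s ∈ Ioo r R, HasDerivAt p (-p s ^ 2 / (s * lam s)) s) ∧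
      (∀ s ∈ Ioo r R, HasDerivAt w
        ((-lam s ^ 2 - 2 * p s * w s + w s ^ 2) / (s * lam s)) s) ∧
      (∀ s ∈ Icc r R, w s ^ 2 ≤ lam s ^ 2) ∧ ∀ s, p s - w s = Φ s := by
  have lmem := left_mem_Icc.2 hrR.le
  have pos : ∀ s ∈ Icc r R, 0 < s * lam s := fun s hs =>
    mul_pos (hr.trans_le hs.1) (hlampos s hs)
  set k : ℝ → ℝ := fun x => 1 / (clamp r R x * lam (clamp r R x)) with hk
  have kpos : ∀ x, 0 < k x := fun x => one_div_pos.2 (pos _ (clamp_mem hrR.le x))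
  have kc : Continuous k := by
    have c1 := continuous_clamp r R
    have c2 : Continuous fun x => lam (clamp r R x) :=
      hlamc.comp_continuous c1 (clamp_mem hrR.le)
    exact continuous_const.div (c1.mul c2) fun x => (pos _ (clamp_mem hrR.le x)).ne'
  have keq : ∀ s ∈ Icc r R, k s = 1 / (s * lam s) := fun s hs => by
    simp only [hk, clamp_eq hs]
  set τ : ℝ → ℝ := fun s => ∫ x in r..s, k x with hτ
  have τd : ∀ s, HasDerivAt τ (k s) s := fun s =>
    intervalIntegral.integral_hasDerivAt_right (kc.intervalIntegrable _ _)
      (kc.stronglyMeasurableAtFilter _ _) kc.continuousAt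
  have τ0 : ∀ s, r ≤ s → 0 ≤ τ s := fun s hs =>
    intervalIntegral.integral_nonneg hs fun x _ => (kpos x).le
  set p0 := max (Φ r - lam r) 0 with hp0
  have p0nn : 0 ≤ p0 := le_max_right _ _
  set p : ℝ → ℝ := fun s => p0 / (1 + p0 * τ s) with hp
  have den : ∀ s, r ≤ s → 0 < 1 + p0 * τ s := fun s hs => by
    have := mul_nonneg p0nn (τ0 s hs)
    linarith
  have pnn : ∀ s, r ≤ s → 0 ≤ p s := fun s hs => div_nonneg p0nn (den s hs).le
  have pd : ∀ s ∈ Icc r R, HasDerivAt p (-p s ^ 2 / (s * lam s)) s := by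
    intro s hs
    have h1 := (((τd s).const_mul p0).const_add 1)
    refine ((hasDerivAt_const s p0).div h1 (den s hs.1).ne').congr_deriv ?_
    have := (den s hs.1).ne'
    have := (pos s hs).ne'
    rw [keq s hs, hp]
    field_simp
    ring
  have pr : p r = p0 := by simp [hp, hτ]
  have cp : ContinuousOn p (Icc r R) := fun s hs => (pd s hs).continuousAt.continuousWithinAt
  have cΦ : ContinuousOn Φ (Icc r R) := fun s hs => (hΦd s hs).continuousWithinAt
  have Φd : ∀ s ∈ Ico r R, HasDerivWithinAt Φ (Φ' s) (Ici s) s := fun s hs =>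
    ((hΦd s (Ico_subset_Icc_self hs)).mono (Icc_subset_Icc_left hs.1)).mono_of_mem_nhdsWithin
      (Icc_mem_nhdsGE hs.2)
  have Φeq : ∀ s ∈ Icc r R, Φ' s = (lam s ^ 2 - Φ s ^ 2) / (s * lam s) := fun s hs => by
    rw [eq_div_iff (pos s hs).ne', ← hΦode s hs]
    ring
  have le1 : ∀ s ∈ Icc r R, p s ≤ Φ s := by
    intro s hs
    refine image_le_of_deriv_right_lt_deriv_boundary' cp
      (fun x hx => (pd x (Ico_subset_Icc_self hx)).hasDerivWithinAt) ?_ cΦ Φd ?_ hs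
    · rw [pr]
      exact max_le (by linarith [hlampos r lmem]) (hΦnn r lmem)
    · intro x hx hxe
      have hx' := Ico_subset_Icc_self hx
      rw [Φeq x hx', hxe]
      have := pow_pos (hlampos x hx') 2
      exact div_lt_div_of_pos_right (by linarith) (pos x hx')
  have le2 : ∀ s ∈ Icc r R, Φ s - lam s ≤ p s := by
    intro s hs
    refine le_of_forall_pos_le_add fun ε hε => ?_
    have hsub : Icc r s ⊆ Icc r R := Icc_subset_Icc_right hs.2
    have hl := hlampos s hs
    have := image_le_of_deriv_right_lt_deriv_boundary' (f := Φ) (f' := Φ') (a := r) (b := s)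
      (B := fun x => p x + (lam s + ε)) (B' := fun x => -p x ^ 2 / (x * lam x))
      (cΦ.mono hsub) (fun x hx => Φd x ⟨hx.1, hx.2.trans_le hs.2⟩)
      (by
        have := hlammono lmem hs hs.1
        have := le_max_left (Φ r - lam r) 0
        simp only [pr]
        linarith)
      ((cp.mono hsub).add continuousOn_const)
      (fun x hx => ((pd x (hsub (Ico_subset_Icc_self hx))).add_const _).hasDerivWithinAt)
      (fun x hx hxe => by
        have hx' := hsub (Ico_subset_Icc_self hx)
        rw [Φeq x hx', hxe]
        refine div_lt_div_of_pos_right ?_ (pos x hx')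
        have h1 := hlammono hx' hs hx.2.le
        have h2 := hlampos x hx'
        have h3 := pnn x hx.1
        nlinarith [mul_nonneg h3 (add_pos hl hε).le, mul_pos hl hε])
      (right_mem_Icc.2 hs.1)
    linarith
  refine ⟨p, fun s => p s - Φ s, cp, cp.sub cΦ, fun s hs => pd s (Ioo_subset_Icc_self hs),
    fun s hs => ?_, fun s hs => ?_, fun s => by ring⟩
  · have hs' := Ioo_subset_Icc_self hs
    refine ((pd s hs').sub ((hΦd s hs').hasDerivAt (Icc_mem_nhds hs.1 hs.2))).congr_deriv ?_
    rw [Φeq s hs', ← sub_div]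
    congr 1
    ring
  · have h1 := le1 s hs
    have h2 := le2 s hs
    exact sq_le_sq' (by linarith) (by linarith [hlampos s hs])

/-! ### Polar coordinates -/

/-- The point with polar coordinates `(s, t)`. -/
noncomputable def pol (s t : ℝ) : ℂ := s * Complex.exp (t * Complex.I)

/-- The open annulus `a < |z| < b`. -/
def annulus (a b : ℝ) : Set ℂ := {z : ℂ | a < ‖z‖ ∧ ‖z‖ < b}

lemma isOpen_annulus (a b : ℝ) : IsOpen (annulus a b) :=
  (isOpen_lt continuous_const continuous_norm).inter (isOpen_lt continuous_norm continuous_const)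

lemma norm_pol {s : ℝ} (hs : 0 ≤ s) (t : ℝ) : ‖pol s t‖ = s := by
  simp [pol, Complex.norm_exp_ofReal_mul_I, abs_of_nonneg hs]

lemma pol_mem {r R s : ℝ} (hr : 0 < r) (hs : s ∈ Ioo r R) (t : ℝ) : pol s t ∈ annulus r R := by
  have := norm_pol (hr.trans hs.1).le t
  exact ⟨by rw [this]; exact hs.1, by rw [this]; exact hs.2⟩

lemma continuous_pol : Continuous (Function.uncurry pol) := by
  unfold pol
  fun_prop

lemma volume_annulus {a b : ℝ} (ha : 0 < a) (hab : a < b) :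
    volume (annulus a b) = ENNReal.ofReal (Real.pi * (b ^ 2 - a ^ 2)) := by
  have e : annulus a b = Metric.ball 0 b \ Metric.closedBall 0 a := by
    ext z
    simp [annulus, and_comm]
  rw [e, measure_sdiff (fun z hz => by
      simp only [Metric.mem_closedBall, Metric.mem_ball] at *
      linarith) Metric.isClosed_closedBall.measurableSet.nullMeasurableSet
      measure_closedBall_lt_top.ne, Complex.volume_ball, Complex.volume_closedBall,
    show ((NNReal.pi : NNReal) : ENNReal) = ENNReal.ofReal Real.pi by
      rw [← NNReal.coe_real_pi, ENNReal.ofReal_coe_nnreal],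
    ← ENNReal.ofReal_pow ha.le, ← ENNReal.ofReal_pow (ha.trans hab).le,
    ← ENNReal.ofReal_mul (by positivity), ← ENNReal.ofReal_mul (by positivity),
    ← ENNReal.ofReal_sub _ (by positivity)]
  congr 1
  ring

/-- Integration in polar coordinates; the ray `t = π` is a null set. -/
lemma lintegral_annulus {r R : ℝ} (hr : 0 < r) (F : ℂ → ENNReal) :
    ∫⁻ z in annulus r R, F z = ∫⁻ x in Ioo r R ×ˢ Ioo (-Real.pi) Real.pi,
      ENNReal.ofReal x.1 * F (pol x.1 x.2) := by
  rw [← lintegral_indicator (isOpen_annulus r R).measurableSet,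
    ← Complex.lintegral_comp_polarCoord_symm,
    ← lintegral_indicator polarCoord.open_target.measurableSet,
    ← lintegral_indicator (measurableSet_Ioo.prod measurableSet_Ioo)]
  congr 1
  ext ⟨s, t⟩
  have e : Complex.polarCoord.symm (s, t) = pol s t := by
    simp [pol, Complex.exp_mul_I]
  by_cases hm : (s, t) ∈ Ioo r R ×ˢ Ioo (-Real.pi) Real.pi
  · rw [indicator_of_mem hm, indicator_of_mem (by
      rw [polarCoord_target]
      exact ⟨hr.trans hm.1.1, hm.2⟩), e, indicator_of_mem (pol_mem hr hm.1 t), smul_eq_mul]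
  · rw [indicator_of_notMem hm]
    by_cases ht : (s, t) ∈ polarCoord.target
    · rw [indicator_of_mem ht, e, indicator_of_notMem, smul_zero]
      rw [polarCoord_target] at ht
      intro hp
      rw [annulus, mem_ofPred_eq, norm_pol (le_of_lt ht.1)] at hp
      exact hm ⟨hp, ht.2⟩
    · rw [indicator_of_notMem ht]

/-- Fubini's theorem on a rectangle, with the inner and outer integrals as interval integrals. -/
lemma iterated {G : ℝ → ℝ → ℝ} {a b : ℝ} (hab : a ≤ b)
    (hG : IntegrableOn (Function.uncurry G) (Ioo a b ×ˢ Ioo (-Real.pi) Real.pi)) :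
    IntervalIntegrable (fun s => ∫ t in (-Real.pi)..Real.pi, G s t) volume a b ∧
    ∫ s in a..b, ∫ t in (-Real.pi)..Real.pi, G s t
      = ∫ x in Ioo a b ×ˢ Ioo (-Real.pi) Real.pi, Function.uncurry G x := by
  have hpi : -Real.pi ≤ Real.pi := by linarith [Real.pi_pos]
  have e : ∀ s, ∫ t in (-Real.pi)..Real.pi, G s t = ∫ t in Ioo (-Real.pi) Real.pi, G s t :=
    fun s => by rw [intervalIntegral.integral_of_le hpi, integral_Ioc_eq_integral_Ioo]
  simp only [e]
  rw [IntegrableOn, Measure.volume_eq_prod, ← Measure.prod_restrict] at hG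
  refine ⟨(intervalIntegrable_iff_integrableOn_Ioo_of_le hab).2 hG.integral_prod_left, ?_⟩
  rw [intervalIntegral.integral_of_le hab, integral_Ioc_eq_integral_Ioo, Measure.volume_eq_prod,
    ← Measure.prod_restrict, integral_prod _ hG]
  rfl

lemma apply_eq (L : ℂ →L[ℝ] ℂ) (u : ℂ) : L u = (u.re : ℂ) * L 1 + (u.im : ℂ) * L Complex.I := by
  conv_lhs => rw [show u = u.re • (1 : ℂ) + u.im • Complex.I by
    simp [Complex.re_add_im]]
  rw [map_add, map_smul, map_smul, Complex.real_smul, Complex.real_smul]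

lemma det_eq_cross (L : ℂ →L[ℝ] ℂ) : LinearMap.det L.toLinearMap = cross (L 1) (L Complex.I) := by
  rw [← LinearMap.det_toMatrix Complex.basisOneI, Matrix.det_fin_two]
  simp [LinearMap.toMatrix_apply, cross]
  ring

lemma cross_rotate (L : ℂ →L[ℝ] ℂ) (s : ℝ) {u : ℂ} (hu : ‖u‖ = 1) :
    cross (L u) (L (s * u * Complex.I)) = s * cross (L 1) (L Complex.I) := by
  have h : u.re * u.re + u.im * u.im = 1 := by
    rw [← Complex.normSq_apply, ← Complex.sq_norm, hu, one_pow]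
  rw [apply_eq L u, apply_eq L (s * u * Complex.I)]
  simp [cross]
  linear_combination (s * ((L 1).re * (L Complex.I).im - (L 1).im * (L Complex.I).re)) * h

lemma normSq_rotate (L : ℂ →L[ℝ] ℂ) (s : ℝ) {u : ℂ} (hu : ‖u‖ = 1) :
    s ^ 2 * ‖L u‖ ^ 2 + ‖L (s * u * Complex.I)‖ ^ 2
      = s ^ 2 * (‖L 1‖ ^ 2 + ‖L Complex.I‖ ^ 2) := by
  have h : u.re * u.re + u.im * u.im = 1 := by
    rw [← Complex.normSq_apply, ← Complex.sq_norm, hu, one_pow]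
  rw [apply_eq L u, apply_eq L (s * u * Complex.I)]
  simp only [Complex.sq_norm, Complex.normSq_apply]
  simp
  linear_combination (s ^ 2 * ((L 1).re ^ 2 + (L 1).im ^ 2 + (L Complex.I).re ^ 2
    + (L Complex.I).im ^ 2)) * h

lemma norm_exp_unit (t : ℝ) : ‖Complex.exp (t * Complex.I)‖ = 1 :=
  Complex.norm_exp_ofReal_mul_I t

lemma exp_periodic (t : ℝ) :
    Complex.exp ((t + 2 * Real.pi : ℝ) * Complex.I) = Complex.exp (t * Complex.I) := by
  rw [← Complex.exp_periodic (t * Complex.I)]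
  congr 1
  push_cast
  ring

/-- A diffeomorphism of annuli, read in polar coordinates. Its area condition is the change of
variables formula for the Jacobian. -/
lemma ocyl_of_diffeo {r R rs Rs : ℝ} (hr : 0 < r) (hrR : r < R) (hrs : 0 < rs) (hrsRs : rs < Rs)
    {h : ℂ → ℂ} (hC : ContDiffOn ℝ 1 h (annulus r R))
    (hbij : BijOn h (annulus r R) (annulus rs Rs))
    (horient : ∀ z ∈ annulus r R, 0 < LinearMap.det ((fderiv ℝ h z).toLinearMap))
    (hcont : ContinuousOn h (closure (annulus r R)))
    (hinner : ∀ z : ℂ, ‖z‖ = r → ‖h z‖ = rs) (houter : ∀ z : ℂ, ‖z‖ = R → ‖h z‖ = Rs) :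
    OCyl r R rs Rs (fun s t => h (pol s t))
      (fun s t => fderiv ℝ h (pol s t) (Complex.exp (t * Complex.I)))
      (fun s t => fderiv ℝ h (pol s t) (s * Complex.exp (t * Complex.I) * Complex.I)) := by
  have hd : ∀ z ∈ annulus r R, HasFDerivAt h (fderiv ℝ h z) z := fun z hz =>
    ((hC.differentiableOn one_ne_zero).differentiableAt
      ((isOpen_annulus r R).mem_nhds hz)).hasFDerivAt
  have cfd : ContinuousOn (fun x : ℝ × ℝ => fderiv ℝ h (pol x.1 x.2)) (Ioo r R ×ˢ univ) :=
    (hC.continuousOn_fderiv_of_isOpen (isOpen_annulus r R) le_rfl).comp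
      continuous_pol.continuousOn fun x hx => pol_mem hr hx.1 x.2
  have c₁ : ContinuousOn (fun x : ℝ × ℝ => fderiv ℝ h (pol x.1 x.2)
      (Complex.exp (x.2 * Complex.I))) (Ioo r R ×ˢ univ) :=
    cfd.clm_apply (by fun_prop)
  have c₂ : ContinuousOn (fun x : ℝ × ℝ => fderiv ℝ h (pol x.1 x.2)
      (x.1 * Complex.exp (x.2 * Complex.I) * Complex.I)) (Ioo r R ×ˢ univ) :=
    cfd.clm_apply (by fun_prop)
  have hJ : ∀ s t, cross (fderiv ℝ h (pol s t) (Complex.exp (t * Complex.I)))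
      (fderiv ℝ h (pol s t) (s * Complex.exp (t * Complex.I) * Complex.I))
      = s * LinearMap.det (fderiv ℝ h (pol s t)).toLinearMap := fun s t => by
    rw [cross_rotate _ _ (norm_exp_unit t), det_eq_cross]
  have jac : ∀ s ∈ Ioo r R, ∀ t,
      0 ≤ cross (fderiv ℝ h (pol s t) (Complex.exp (t * Complex.I)))
        (fderiv ℝ h (pol s t) (s * Complex.exp (t * Complex.I) * Complex.I)) := fun s hs t => by
    rw [hJ]
    exact (mul_pos (hr.trans hs.1) (horient _ (pol_mem hr hs t))).le
  set S := Ioo r R ×ˢ Ioo (-Real.pi) Real.pi with hS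
  have mS : MeasurableSet S := measurableSet_Ioo.prod measurableSet_Ioo
  set G : ℝ → ℝ → ℝ := fun s t =>
    cross (fderiv ℝ h (pol s t) (Complex.exp (t * Complex.I)))
      (fderiv ℝ h (pol s t) (s * Complex.exp (t * Complex.I) * Complex.I)) with hG
  have cG : ContinuousOn (Function.uncurry G) S := by
    have hsub : S ⊆ Ioo r R ×ˢ univ := prod_mono subset_rfl (subset_univ _)
    have d1 := c₁.mono hsub
    have d2 := c₂.mono hsub
    have r1 := Complex.continuous_re.comp_continuousOn d1
    have i1 := Complex.continuous_im.comp_continuousOn d1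
    have r2 := Complex.continuous_re.comp_continuousOn d2
    have i2 := Complex.continuous_im.comp_continuousOn d2
    exact (r1.mul i2).sub (i1.mul r2)
  have nnG : 0 ≤ᵐ[volume.restrict S] Function.uncurry G :=
    (ae_restrict_iff' mS).2 (Filter.Eventually.of_forall fun x hx => jac x.1 hx.1 x.2)
  have lint : ∫⁻ x in S, ENNReal.ofReal (Function.uncurry G x)
      = ENNReal.ofReal (Real.pi * (Rs ^ 2 - rs ^ 2)) := by
    rw [← volume_annulus hrs hrsRs, ← hbij.image_eq,
      ← lintegral_abs_det_fderiv_eq_addHaar_image volume (isOpen_annulus r R).measurableSet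
        (fun z hz => (hd z hz).hasFDerivWithinAt) hbij.injOn, lintegral_annulus hr]
    refine setLIntegral_congr_fun mS fun x hx => ?_
    have hz := pol_mem hr hx.1 x.2
    have : |(fderiv ℝ h (pol x.1 x.2)).det| = (fderiv ℝ h (pol x.1 x.2)).det :=
      abs_of_pos (horient _ hz)
    rw [this, ← ENNReal.ofReal_mul (hr.trans hx.1.1).le]
    exact congrArg ENNReal.ofReal (hJ x.1 x.2)
  have intG : IntegrableOn (Function.uncurry G) S := by
    refine ⟨cG.aestronglyMeasurable mS, ?_⟩
    rw [hasFiniteIntegral_iff_ofReal nnG, lint]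
    exact ENNReal.ofReal_lt_top
  have hpos : 0 ≤ Real.pi * (Rs ^ 2 - rs ^ 2) :=
    mul_nonneg Real.pi_pos.le (by nlinarith)
  have valG : ∫ x in S, Function.uncurry G x = Real.pi * (Rs ^ 2 - rs ^ 2) := by
    rw [integral_eq_lintegral_of_nonneg_ae nnG (cG.aestronglyMeasurable mS), lint,
      ENNReal.toReal_ofReal hpos]
  obtain ⟨it1, it2⟩ := iterated hrR.le intG
  refine ⟨hr, hrR, hrs, hrsRs, ?_, c₁, c₂, fun s hs t => ?_, fun s hs t => ?_, fun s t => ?_,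
    fun s t => ?_, fun s hs t => (hbij.mapsTo (pol_mem hr hs t)).1,
    fun s hs t => (hbij.mapsTo (pol_mem hr hs t)).2, fun t => hinner _ (norm_pol hr.le t),
    fun t => houter _ (norm_pol (hr.trans hrR).le t), jac, it1, it2.trans valG⟩
  · refine hcont.comp continuous_pol.continuousOn fun x hx => ?_
    have hx1 : x.1 ∈ closure (Ioo r R) := by
      rw [closure_Ioo hrR.ne]
      exact hx.1
    exact map_mem_closure (f := fun s => pol s x.2)
      (continuous_pol.comp (by fun_prop : Continuous fun s : ℝ => (s, x.2))) hx1
      fun s hs => pol_mem hr hs x.2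
  · have hp : HasDerivAt (fun x : ℝ => pol x t) (Complex.exp (t * Complex.I)) s := by
      simpa [pol] using (Complex.ofRealCLM.hasDerivAt (x := s)).mul_const
        (Complex.exp (t * Complex.I))
    exact (hd _ (pol_mem hr hs t)).comp_hasDerivAt s hp
  · have hp : HasDerivAt (fun x : ℝ => pol s x)
        (s * Complex.exp (t * Complex.I) * Complex.I) t := by
      have h1 : HasDerivAt (fun x : ℝ => (x : ℂ) * Complex.I) Complex.I t := by
        simpa using (Complex.ofRealCLM.hasDerivAt (x := t)).mul_const Complex.I
      refine (h1.cexp.const_mul (s : ℂ)).congr_deriv ?_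
      ring
    exact (hd _ (pol_mem hr hs t)).comp_hasDerivAt t hp
  · simp only [pol, exp_periodic]
  · simp only [pol, exp_periodic]

/-- Lower bound for the weighted Dirichlet energy over orientation-preserving C¹
diffeomorphisms of the annulus `A(r,R) = {r < |z| < R}` onto `A(r_*,R_*)` preserving the order
of boundary components, for a continuous, positive, nondecreasing weight `lam` and the
characteristic pair `(Φ, H)` (with `Φ ≥ 0`) of the radial minimizer:
`∫_{A(r,R)} λ(|z|)·‖Dh(z)‖² dz ≥ 2π(R_*²·Φ(R) − r_*²·Φ(r))`.
Here `‖Dh(z)‖² = ‖∂h/∂x‖² + ‖∂h/∂y‖²` is the squared Hilbert–Schmidt norm of the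
differential, and the energy is written as a lower Lebesgue integral so that maps of
infinite energy are included. -/
theorem stmt_0 (r R rs Rs : ℝ) (hr : 0 < r) (hrR : r < R) (hrs : 0 < rs) (hrsRs : rs < Rs)
    (lam Φ Φ' H H' : ℝ → ℝ)
    (hlamc : ContinuousOn lam (Icc r R))
    (hlampos : ∀ s ∈ Icc r R, 0 < lam s)
    (hlammono : MonotoneOn lam (Icc r R))
    (hΦd : ∀ s ∈ Icc r R, HasDerivWithinAt Φ (Φ' s) (Icc r R) s)
    (hΦ'c : ContinuousOn Φ' (Icc r R))
    (hΦode : ∀ s ∈ Icc r R, s * lam s * Φ' s = lam s ^ 2 - Φ s ^ 2)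
    (hΦnn : ∀ s ∈ Icc r R, 0 ≤ Φ s)
    (hHd : ∀ s ∈ Icc r R, HasDerivWithinAt H (H' s) (Icc r R) s)
    (hH'c : ContinuousOn H' (Icc r R))
    (hHode : ∀ s ∈ Icc r R, s * lam s * H' s = H s * Φ s)
    (hHr : H r = rs) (hHR : H R = Rs)
    (h : ℂ → ℂ)
    (hC : ContDiffOn ℝ 1 h {z : ℂ | r < ‖z‖ ∧ ‖z‖ < R})
    (hbij : BijOn h {z : ℂ | r < ‖z‖ ∧ ‖z‖ < R} {w : ℂ | rs < ‖w‖ ∧ ‖w‖ < Rs})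
    (horient : ∀ z ∈ {z : ℂ | r < ‖z‖ ∧ ‖z‖ < R},
      0 < LinearMap.det ((fderiv ℝ h z).toLinearMap))
    (hcont : ContinuousOn h (closure {z : ℂ | r < ‖z‖ ∧ ‖z‖ < R}))
    (hinner : ∀ z : ℂ, ‖z‖ = r → ‖h z‖ = rs)
    (houter : ∀ z : ℂ, ‖z‖ = R → ‖h z‖ = Rs) :
    (∫⁻ z in {z : ℂ | r < ‖z‖ ∧ ‖z‖ < R},
        ENNReal.ofReal
          (lam ‖z‖ * (‖fderiv ℝ h z 1‖ ^ 2 + ‖fderiv ℝ h z Complex.I‖ ^ 2))) ≥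
      ENNReal.ofReal (2 * Real.pi * (Rs ^ 2 * Φ R - rs ^ 2 * Φ r)) := by
  have F := ocyl_of_diffeo hr hrR hrs hrsRs hC hbij horient hcont hinner houter
  obtain ⟨p, w, cp, cw, hp, hw, hwl, hpw⟩ :=
    exists_pair hr hrR hlamc hlampos hlammono hΦd hΦode hΦnn
  have key := F.energy_bound hlamc cp cw hlampos hp hw hwl (E := ∫⁻ z in annulus r R,
    ENNReal.ofReal (lam ‖z‖ * (‖fderiv ℝ h z 1‖ ^ 2 + ‖fderiv ℝ h z Complex.I‖ ^ 2))) ?_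
  · rwa [hpw, hpw] at key
  intro a b ha hab hb
  set G : ℝ → ℝ → ℝ := fun s t =>
    s * lam s * ‖fderiv ℝ h (pol s t) (Complex.exp (t * Complex.I))‖ ^ 2
      + lam s / s * ‖fderiv ℝ h (pol s t) (s * Complex.exp (t * Complex.I) * Complex.I)‖ ^ 2
    with hG
  have cG : ContinuousOn (Function.uncurry G) (Icc a b ×ˢ Icc (-Real.pi) Real.pi) := by
    have hsub : Icc a b ×ˢ Icc (-Real.pi) Real.pi ⊆ Ioo r R ×ˢ univ :=
      prod_mono (Icc_subset_Ioo ha hb) (subset_univ _)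
    have d1 := (F.c₁.mono hsub).norm.pow 2
    have d2 := (F.c₂.mono hsub).norm.pow 2
    have cl : ContinuousOn (fun x : ℝ × ℝ => lam x.1) (Icc a b ×ˢ Icc (-Real.pi) Real.pi) :=
      hlamc.comp continuousOn_fst fun x hx => Icc_subset_Icc ha.le hb.le hx.1
    exact ((continuousOn_fst.mul cl).mul d1).add
      ((cl.div continuousOn_fst fun x hx => (hr.trans (ha.trans_le hx.1.1)).ne').mul d2)
  have intG : IntegrableOn (Function.uncurry G) (Ioo a b ×ˢ Ioo (-Real.pi) Real.pi) :=
    (cG.integrableOn_compact (isCompact_Icc.prod isCompact_Icc)).mono_set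
      (prod_mono Ioo_subset_Icc_self Ioo_subset_Icc_self)
  have mS : MeasurableSet (Ioo a b ×ˢ Ioo (-Real.pi) Real.pi) :=
    measurableSet_Ioo.prod measurableSet_Ioo
  have nnG : 0 ≤ᵐ[volume.restrict (Ioo a b ×ˢ Ioo (-Real.pi) Real.pi)] Function.uncurry G := by
    refine (ae_restrict_iff' mS).2 (Filter.Eventually.of_forall fun x hx => ?_)
    have h1 : 0 < x.1 := hr.trans (ha.trans hx.1.1)
    have h2 := hlampos x.1 ⟨(ha.trans hx.1.1).le, (hx.1.2.trans hb).le⟩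
    simp only [Function.uncurry, hG, Pi.zero_apply]
    positivity
  rw [(iterated hab intG).2, ofReal_integral_eq_lintegral_ofReal intG nnG, lintegral_annulus hr]
  refine le_trans (le_of_eq (setLIntegral_congr_fun mS fun x hx => ?_))
    (lintegral_mono_set (prod_mono (Ioo_subset_Ioo ha.le hb.le) subset_rfl))
  have h1 : 0 < x.1 := hr.trans (ha.trans hx.1.1)
  simp only [norm_pol h1.le]
  rw [← ENNReal.ofReal_mul h1.le]
  congr 1
  have hn := normSq_rotate (fderiv ℝ h (pol x.1 x.2)) x.1 (norm_exp_unit x.2)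
  simp only [Function.uncurry, hG]
  generalize ‖fderiv ℝ h (pol x.1 x.2) (x.1 * Complex.exp (x.2 * Complex.I) * Complex.I)‖ = A
    at hn ⊢
  rw [eq_comm, ← sub_eq_zero]
  field_simp
  linear_combination (-lam x.1) * hn
end

section
/- Let 0 < r < R, 0 < r_* < R_*, and let λ : [r,R] → ℝ be continuous and positive. Suppose Φ : [r,R] → ℝ is a C¹ function satisfying s·λ(s)·Φ'(s) = λ(s)² − Φ(s)², and H : [r,R] → ℝ is a positive C¹ function satisfying s·λ(s)·H'(s) = H(s)·Φ(s), H(r) = r_* and H(R) = R_*. Then the radial map h₀(s·e^{iθ}) = H(s)·e^{iθ} satisfies ∫_{A(r,R)} λ(|z|)·‖Dh₀(z)‖² dz = 2π(R_*²·Φ(R) − r_*²·Φ(r)); equivalently, 2π·∫_r^R λ(s)·(H'(s)² + H(s)²/s²)·s ds = 2π(H(R)²·Φ(R) − H(r)²·Φ(r)). -/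
/-!
Both ODEs together give `(H²Φ)' = 2HH'Φ + H²Φ' = H²(λ² + Φ²)/(sλ) = λ(H'² + H²/s²)s`, so the
one-dimensional energy is the boundary term `H²Φ` by the fundamental theorem of calculus
(`radial_energy`).

The planar integral reduces to the one-dimensional one: with `G(s) = H(s)/s`, the map
`w ↦ G(‖w‖) • w` has differential `v ↦ G v + G' ⟨z, v⟩/‖z‖ z`, whose squared Hilbert–Schmidt norm is
`G² + (G + sG')² = H²/s² + H'²` (`radial_hilbertSchmidt`); the integrand is thus a function of
`‖z‖`, and integration in polar coordinates produces the factor `2π s`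
(`integral_annulus_norm`).
-/

open Set MeasureTheory

/-- The squared Hilbert–Schmidt norm of the differential of a radial map. -/
lemma radial_hilbertSchmidt {H : ℝ → ℝ} {a : ℝ} {z : ℂ} (hz : 0 < ‖z‖)
    (hH : HasDerivAt H a ‖z‖) :
    ‖fderiv ℝ (fun w : ℂ => (H ‖w‖ / ‖w‖) • w) z 1‖ ^ 2 +
      ‖fderiv ℝ (fun w : ℂ => (H ‖w‖ / ‖w‖) • w) z Complex.I‖ ^ 2 =
    a ^ 2 + H ‖z‖ ^ 2 / ‖z‖ ^ 2 := by
  have hs := hz.ne'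
  obtain ⟨b, hb⟩ : ∃ b, b = (a * ‖z‖ - H ‖z‖) / ‖z‖ ^ 2 := ⟨_, rfl⟩
  have hG : HasDerivAt (fun s => H s / s) b ‖z‖ :=
    (hH.div (hasDerivAt_id ‖z‖) hs).congr_deriv (by simp [hb])
  -- the norm is differentiated as the square root of its square
  have hn : HasFDerivAt (fun w : ℂ => ‖w‖) ((1 / (2 * ‖z‖)) • (2 • innerSL ℝ z)) z := by
    have h := ((hasStrictFDerivAt_norm_sq z).hasFDerivAt).sqrt (by positivity)
    simpa [Real.sqrt_sq] using h
  have hF := (hG.comp_hasFDerivAt z hn).smul (hasFDerivAt_id (𝕜 := ℝ) z)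
  have hF' : fderiv ℝ (fun w : ℂ => (H ‖w‖ / ‖w‖) • w) z = _ := hF.fderiv
  rw [hF']
  have hsq : z.re ^ 2 + z.im ^ 2 = ‖z‖ ^ 2 := by
    rw [Complex.sq_norm, Complex.normSq_apply]; ring
  rw [Complex.sq_norm, Complex.sq_norm, Complex.normSq_apply, Complex.normSq_apply]
  simp [Complex.inner]
  have ha : a = b * ‖z‖ + H ‖z‖ / ‖z‖ := by rw [hb]; field_simp; ring
  rw [ha]
  clear hF hF' hG hn hH hb ha
  generalize H ‖z‖ = h
  generalize ‖z‖ = s at *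
  trans 2 * (h / s) ^ 2 + 2 * h * b * (z.re ^ 2 + z.im ^ 2) / s ^ 2
      + b ^ 2 * (z.re ^ 2 + z.im ^ 2) ^ 2 / s ^ 2
  · field_simp
    ring
  · rw [hsq]
    field_simp
    ring

/-- Polar coordinates for a radial integrand on an annulus. -/
lemma integral_annulus_norm {r R : ℝ} (hr : 0 < r) (hrR : r < R) (g : ℝ → ℝ) :
    ∫ z in {z : ℂ | r < ‖z‖ ∧ ‖z‖ < R}, g ‖z‖ = 2 * Real.pi * ∫ s in r..R, g s * s := by
  have hm : MeasurableSet {z : ℂ | r < ‖z‖ ∧ ‖z‖ < R} :=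
    (measurableSet_lt measurable_const measurable_norm).inter
      (measurableSet_lt measurable_norm measurable_const)
  rw [← integral_indicator hm]
  have h := integral_fun_norm_addHaar (volume : Measure ℂ) ((Ioo r R).indicator g)
  have hball : (volume : Measure ℂ).real (Metric.ball 0 1) = Real.pi := by
    simp [Measure.real, Complex.volume_ball]
  rw [hball, Complex.finrank_real_complex] at h
  have he : ∀ z : ℂ, {z : ℂ | r < ‖z‖ ∧ ‖z‖ < R}.indicator (fun z => g ‖z‖) z
      = (Ioo r R).indicator g ‖z‖ := fun z => by
    simp only [indicator, mem_ofPred_eq, mem_Ioo]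
  simp_rw [he, h]
  have he2 : ∀ y : ℝ, y ^ (2 - 1) • (Ioo r R).indicator g y
      = (Ioo r R).indicator (fun s => g s * s) y := fun y => by
    by_cases hy : y ∈ Ioo r R <;> simp [hy, mul_comm]
  simp_rw [he2]
  have hsub : Ioo r R ⊆ Ioi 0 := fun x hx => lt_trans hr hx.1
  rw [setIntegral_indicator measurableSet_Ioo,
    inter_eq_right.mpr hsub,
    intervalIntegral.integral_of_le hrR.le, integral_Ioc_eq_integral_Ioo]
  simp only [nsmul_eq_mul, smul_eq_mul]
  push_cast
  ring

/-- The energy density in the radial variable is the derivative of `H² Φ`. -/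
lemma radial_energy {r R : ℝ} (hr : 0 < r) (hrR : r < R) {lam Φ Φ' H H' : ℝ → ℝ}
    (hlamc : ContinuousOn lam (Icc r R))
    (hlampos : ∀ s ∈ Icc r R, 0 < lam s)
    (hΦd : ∀ s ∈ Icc r R, HasDerivWithinAt Φ (Φ' s) (Icc r R) s)
    (hΦode : ∀ s ∈ Icc r R, s * lam s * Φ' s = lam s ^ 2 - Φ s ^ 2)
    (hHd : ∀ s ∈ Icc r R, HasDerivWithinAt H (H' s) (Icc r R) s)
    (hH'c : ContinuousOn H' (Icc r R))
    (hHode : ∀ s ∈ Icc r R, s * lam s * H' s = H s * Φ s) :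
    ∫ s in r..R, lam s * (H' s ^ 2 + H s ^ 2 / s ^ 2) * s = H R ^ 2 * Φ R - H r ^ 2 * Φ r := by
  have hHc : ContinuousOn H (Icc r R) := fun s hs => (hHd s hs).continuousWithinAt
  have hΦc : ContinuousOn Φ (Icc r R) := fun s hs => (hΦd s hs).continuousWithinAt
  refine intervalIntegral.integral_eq_sub_of_hasDerivAt_of_le hrR.le
    (f := fun s => H s ^ 2 * Φ s) ((hHc.pow 2).mul hΦc) (fun s hs => ?_) ?_
  · have hs' := Ioo_subset_Icc_self hs
    have hn : Icc r R ∈ nhds s := Icc_mem_nhds hs.1 hs.2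
    have h := (((hHd s hs').hasDerivAt hn).pow 2).mul ((hΦd s hs').hasDerivAt hn)
    refine h.congr_deriv ?_
    have hs0 : s ≠ 0 := (hr.trans hs.1).ne'
    have hl0 : lam s ≠ 0 := (hlampos s hs').ne'
    have e1 : H' s = H s * Φ s / (s * lam s) := by
      rw [← hHode s hs']; field_simp
    have e2 : Φ' s = (lam s ^ 2 - Φ s ^ 2) / (s * lam s) := by
      rw [← hΦode s hs']; field_simp
    simp only [e1, e2, Pi.pow_apply]
    push_cast
    field_simp
    ring
  · refine ContinuousOn.intervalIntegrable ?_
    rw [uIcc_of_le hrR.le]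
    refine (hlamc.mul ((hH'c.pow 2).add ((hHc.pow 2).div (continuousOn_id.pow 2) ?_))).mul
      continuousOn_id
    intro s hs
    exact pow_ne_zero 2 (hr.trans_le hs.1).ne'

/-- Energy of the radial map. With a continuous positive weight `lam` on `[r,R]`,
a C¹ solution `Φ` of `s·λ·Φ' = λ² − Φ²` and a positive C¹ solution `H` of `s·λ·H' = H·Φ`
with `H(r) = r_*`, `H(R) = R_*`, the radial map `h₀(z) = H(|z|)·z/|z|` satisfies
`∫_{A(r,R)} λ(|z|)·‖Dh₀(z)‖² dz = 2π(R_*²·Φ(R) − r_*²·Φ(r))`; equivalently,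
`2π·∫_r^R λ(s)·(H'(s)² + H(s)²/s²)·s ds = 2π·(H(R)²·Φ(R) − H(r)²·Φ(r))`. -/
theorem stmt_1 (r R rs Rs : ℝ) (hr : 0 < r) (hrR : r < R) (hrs : 0 < rs) (hrsRs : rs < Rs)
    (lam Φ Φ' H H' : ℝ → ℝ)
    (hlamc : ContinuousOn lam (Icc r R))
    (hlampos : ∀ s ∈ Icc r R, 0 < lam s)
    (hΦd : ∀ s ∈ Icc r R, HasDerivWithinAt Φ (Φ' s) (Icc r R) s)
    (hΦ'c : ContinuousOn Φ' (Icc r R))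
    (hΦode : ∀ s ∈ Icc r R, s * lam s * Φ' s = lam s ^ 2 - Φ s ^ 2)
    (hHd : ∀ s ∈ Icc r R, HasDerivWithinAt H (H' s) (Icc r R) s)
    (hH'c : ContinuousOn H' (Icc r R))
    (hHpos : ∀ s ∈ Icc r R, 0 < H s)
    (hHode : ∀ s ∈ Icc r R, s * lam s * H' s = H s * Φ s)
    (hHr : H r = rs) (hHR : H R = Rs) :
    (∫ z in {z : ℂ | r < ‖z‖ ∧ ‖z‖ < R},
        lam ‖z‖ *
          (‖fderiv ℝ (fun w : ℂ => (H ‖w‖ / ‖w‖) • w) z 1‖ ^ 2 +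
            ‖fderiv ℝ (fun w : ℂ => (H ‖w‖ / ‖w‖) • w) z Complex.I‖ ^ 2)) =
      2 * Real.pi * (Rs ^ 2 * Φ R - rs ^ 2 * Φ r) ∧
    2 * Real.pi * (∫ s in r..R, lam s * (H' s ^ 2 + H s ^ 2 / s ^ 2) * s) =
      2 * Real.pi * (H R ^ 2 * Φ R - H r ^ 2 * Φ r) := by
  have h1 := radial_energy hr hrR hlamc hlampos hΦd hΦode hHd hH'c hHode
  refine ⟨?_, by rw [h1]⟩
  have hm : MeasurableSet {z : ℂ | r < ‖z‖ ∧ ‖z‖ < R} :=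
    (measurableSet_lt measurable_const measurable_norm).inter
      (measurableSet_lt measurable_norm measurable_const)
  rw [← hHr, ← hHR, ← h1, ← integral_annulus_norm hr hrR
    (fun s => lam s * (H' s ^ 2 + H s ^ 2 / s ^ 2))]
  refine setIntegral_congr_fun hm fun z hz => ?_
  have hd := (hHd ‖z‖ ⟨hz.1.le, hz.2.le⟩).hasDerivAt (Icc_mem_nhds hz.1 hz.2)
  simp only [radial_hilbertSchmidt (hr.trans hz.1) hd]
end

section
/- Let 0 < r < R and let λ : [r,R] → ℝ be continuous and positive. If Φ : [r,R] → ℝ is a differentiable function satisfying s·λ(s)·Φ'(s) = λ(s)² − Φ(s)² on [r,R], then Φ has at most one zero on [r,R]; moreover, if Φ(r₀) = 0 for some r₀ ∈ [r,R], then Φ(s) < 0 for all s ∈ [r,r₀) and Φ(s) > 0 for all s ∈ (r₀,R]. -/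
/-!
With the integrating factor `exp G`, where `G s = ∫_r^s Φ(t) / (t λ(t)) dt`, the Riccati equation
`Φ' = λ / s - Φ² / (s λ)` becomes `(Φ exp G)' = exp G * λ / s > 0`. So `Φ exp G` is strictly
increasing on `[r, R]` (`exists_strictMonoOn_mul_exp`). Since it has the same sign as `Φ`, it
forces `Φ` to be negative before, and positive after, any zero.
-/

open Set

theorem exists_strictMonoOn_mul_exp (r R : ℝ) (hr : 0 < r) (hrR : r < R)
    (lam Φ Φ' : ℝ → ℝ)
    (hlamc : ContinuousOn lam (Icc r R))
    (hlampos : ∀ s ∈ Icc r R, 0 < lam s)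
    (hΦd : ∀ s ∈ Icc r R, HasDerivWithinAt Φ (Φ' s) (Icc r R) s)
    (hΦode : ∀ s ∈ Icc r R, s * lam s * Φ' s = lam s ^ 2 - Φ s ^ 2) :
    ∃ G : ℝ → ℝ, StrictMonoOn (fun s => Φ s * Real.exp (G s)) (Icc r R) := by
  have hΦc : ContinuousOn Φ (Icc r R) := fun s hs => (hΦd s hs).continuousWithinAt
  have hgc : ContinuousOn (fun t => Φ t / (t * lam t)) (Icc r R) :=
    hΦc.div (continuousOn_id.mul hlamc) fun t ht =>
      (mul_pos (hr.trans_le ht.1) (hlampos t ht)).ne'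
  have hGc : ContinuousOn (fun s => ∫ t in r..s, Φ t / (t * lam t)) (Icc r R) := by
    have h := intervalIntegral.continuousOn_primitive_interval (μ := MeasureTheory.volume)
      (f := fun t => Φ t / (t * lam t)) (a := r) (b := R)
      (by rw [uIcc_of_le hrR.le]; exact hgc.integrableOn_Icc)
    rwa [uIcc_of_le hrR.le] at h
  refine ⟨fun s => ∫ t in r..s, Φ t / (t * lam t), ?_⟩
  refine strictMonoOn_of_deriv_pos (convex_Icc r R) (hΦc.mul hGc.rexp) fun s hs => ?_
  rw [interior_Icc] at hs
  have hsI : s ∈ Icc r R := Ioo_subset_Icc_self hs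
  have hnhds : Icc r R ∈ nhds s := Icc_mem_nhds hs.1 hs.2
  have hG : HasDerivAt (fun s => ∫ t in r..s, Φ t / (t * lam t)) (Φ s / (s * lam s)) s := by
    refine intervalIntegral.integral_hasDerivAt_right ?_ ?_ (hgc.continuousAt hnhds)
    · refine (hgc.mono ?_).intervalIntegrable
      rw [uIcc_of_le hs.1.le]
      exact Icc_subset_Icc_right hs.2.le
    · exact (hgc.mono Ioo_subset_Icc_self).stronglyMeasurableAtFilter isOpen_Ioo s hs
  have hs0 : 0 < s := hr.trans hs.1
  have hl : 0 < lam s := hlampos s hsI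
  have hsum : Φ' s + Φ s * (Φ s / (s * lam s)) = lam s / s := by
    field_simp
    linarith [hΦode s hsI]
  have hd := ((hΦd s hsI).hasDerivAt hnhds).mul hG.exp
  have hpos : 0 < lam s / s * Real.exp (∫ t in r..s, Φ t / (t * lam t)) := by positivity
  refine (hd.deriv.trans ?_).symm ▸ hpos
  rw [← hsum]
  ring

/-- A differentiable solution `Φ` of `s·λ(s)·Φ'(s) = λ(s)² − Φ(s)²` on `[r,R]`
has at most one zero; moreover if `Φ(r₀) = 0` then `Φ < 0` on `[r,r₀)` and `Φ > 0` on `(r₀,R]`. -/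
theorem stmt_5 (r R : ℝ) (hr : 0 < r) (hrR : r < R)
    (lam Φ Φ' : ℝ → ℝ)
    (hlamc : ContinuousOn lam (Icc r R))
    (hlampos : ∀ s ∈ Icc r R, 0 < lam s)
    (hΦd : ∀ s ∈ Icc r R, HasDerivWithinAt Φ (Φ' s) (Icc r R) s)
    (hΦode : ∀ s ∈ Icc r R, s * lam s * Φ' s = lam s ^ 2 - Φ s ^ 2) :
    (∀ a ∈ Icc r R, ∀ b ∈ Icc r R, Φ a = 0 → Φ b = 0 → a = b) ∧
    (∀ r₀ ∈ Icc r R, Φ r₀ = 0 →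
      (∀ s ∈ Icc r R, s < r₀ → Φ s < 0) ∧ (∀ s ∈ Icc r R, r₀ < s → 0 < Φ s)) := by
  obtain ⟨G, hG⟩ := exists_strictMonoOn_mul_exp r R hr hrR lam Φ Φ' hlamc hlampos hΦd hΦode
  have hneg : ∀ a ∈ Icc r R, Φ a = 0 → ∀ s ∈ Icc r R, s < a → Φ s < 0 := by
    intro a ha h0 s hs hsa
    have h : Φ s * Real.exp (G s) < Φ a * Real.exp (G a) := hG hs ha hsa
    rw [h0, zero_mul] at h
    exact neg_of_mul_neg_left h (Real.exp_pos _).le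
  have hpos : ∀ a ∈ Icc r R, Φ a = 0 → ∀ s ∈ Icc r R, a < s → 0 < Φ s := by
    intro a ha h0 s hs has
    have h : Φ a * Real.exp (G a) < Φ s * Real.exp (G s) := hG ha hs has
    rw [h0, zero_mul] at h
    exact (mul_pos_iff_of_pos_right (Real.exp_pos _)).1 h
  refine ⟨fun a ha b hb h0a h0b => ?_, fun a ha h0 => ⟨hneg a ha h0, hpos a ha h0⟩⟩
  rcases lt_trichotomy a b with h | h | h
  · exact absurd h0b (hpos a ha h0a b hb h).ne'
  · exact h
  · exact absurd h0b (hneg a ha h0a b hb h).ne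
end

section
/- Let 0 < r < R, let λ : [r,R] → ℝ be continuous and positive, and let c ∈ ℝ. Suppose Φ : [r,R] → ℝ is a C¹ function satisfying s·λ(s)·Φ'(s) = λ(s)² − Φ(s)², and H : [r,R] → ℝ is a positive C¹ function satisfying s·λ(s)·H'(s) = H(s)·Φ(s) with H'(s) > 0 on [r,R] (so Φ > 0 on [r,R]). Define τ(s) = Φ(s) − c/H(s). Then the identity (λ(s)/s − τ'(s))·(s·λ(s) − c/H'(s)) = τ(s)² holds for every s ∈ [r,R]. -/
/-!
Since `H' > 0`, the equation for `H` forces `Φ > 0`. Differentiating `τ = Φ - c / H` and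
eliminating `Φ'` and `H'` with the two ODEs, the factors on the left become
`λ / s - τ' = Φ τ / (s λ)` and `s λ - c / H' = s λ τ / Φ`, whose product is `τ ^ 2`.
-/

open Set

/-- With `Φ` a C¹ solution of `s·λ·Φ' = λ² − Φ²` and `H` a positive C¹ solution of
`s·λ·H' = H·Φ` with `H' > 0` on `[r,R]`, the function `τ(s) = Φ(s) − c/H(s)` satisfies the
identity `(λ(s)/s − τ'(s))·(s·λ(s) − c/H'(s)) = τ(s)²` on `[r,R]`. -/
theorem stmt_7 (r R : ℝ) (hr : 0 < r) (hrR : r < R)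
    (lam Φ Φ' H H' : ℝ → ℝ) (c : ℝ)
    (hlamc : ContinuousOn lam (Icc r R))
    (hlampos : ∀ s ∈ Icc r R, 0 < lam s)
    (hΦd : ∀ s ∈ Icc r R, HasDerivWithinAt Φ (Φ' s) (Icc r R) s)
    (hΦ'c : ContinuousOn Φ' (Icc r R))
    (hΦode : ∀ s ∈ Icc r R, s * lam s * Φ' s = lam s ^ 2 - Φ s ^ 2)
    (hHd : ∀ s ∈ Icc r R, HasDerivWithinAt H (H' s) (Icc r R) s)
    (hH'c : ContinuousOn H' (Icc r R))
    (hHpos : ∀ s ∈ Icc r R, 0 < H s)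
    (hHode : ∀ s ∈ Icc r R, s * lam s * H' s = H s * Φ s)
    (hH'pos : ∀ s ∈ Icc r R, 0 < H' s)
    (τ τ' : ℝ → ℝ)
    (hτ : τ = fun s => Φ s - c / H s)
    (hτ'd : ∀ s ∈ Icc r R, HasDerivWithinAt τ (τ' s) (Icc r R) s) :
    ∀ s ∈ Icc r R, (lam s / s - τ' s) * (s * lam s - c / H' s) = τ s ^ 2 := by
  intro s hs
  have hs0 : 0 < s := hr.trans_le hs.1
  have hl := hlampos s hs
  have hH := hHpos s hs
  have hH' := hH'pos s hs
  have e1 := hΦode s hs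
  have e2 := hHode s hs
  have hΦ : 0 < Φ s := by
    have h : 0 < H s * Φ s := e2 ▸ by positivity
    exact (pos_iff_pos_of_mul_pos h).mp hH
  -- Derivatives within a nondegenerate interval are unique, which identifies `τ' s`.
  have hd : τ' s = Φ' s - (0 * H s - c * H' s) / H s ^ 2 := by
    have h := (hΦd s hs).sub ((hasDerivWithinAt_const s (Icc r R) c).div (hHd s hs) hH.ne')
    have h0 := hτ'd s hs
    rw [hτ] at h0
    exact (uniqueDiffOn_Icc hrR s hs).eq_deriv _ h0 h
  have hτs : τ s = Φ s - c / H s := by rw [hτ]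
  have eΦ' : Φ' s = (lam s ^ 2 - Φ s ^ 2) / (s * lam s) := by
    rw [← e1]; field_simp
  have eH' : H' s = H s * Φ s / (s * lam s) := by
    rw [← e2]; field_simp
  -- The two factors are `Φ τ / (s λ)` and `s λ τ / Φ`.
  have f1 : lam s / s - τ' s = Φ s * τ s / (s * lam s) := by
    rw [hd, hτs, eΦ', eH']; field_simp; ring
  have f2 : s * lam s - c / H' s = s * lam s * τ s / Φ s := by
    rw [hτs, eH']; field_simp
  rw [f1, f2]; field_simp
end

section
/- Let 0 < r < R and let λ : [r,R] → ℝ be continuous, positive and nondecreasing. If Φ : [r,R] → ℝ is a C¹ function satisfying s·λ(s)·Φ'(s) = λ(s)² − Φ(s)² on [r,R], and Φ(s₀) ≤ λ(s₀) at some point s₀ ∈ [r,R], then Φ(s) ≤ λ(s) for every s ∈ [s₀,R]. -/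
/-!
Fix the endpoint `s` and a constant `c > λ(s)`. By monotonicity `λ ≤ λ(s) < c` on `[s₀, s]`, so the
equation gives `Φ' < 0` at every point of `[s₀, s]` where `Φ = c`. Since `Φ(s₀) ≤ λ(s₀) < c`, the
function `Φ` cannot cross the level `c` on `[s₀, s]`, so `Φ(s) ≤ c`; let `c` decrease to `λ(s)`.
Comparing with a constant, rather than with `λ`, avoids differentiating `λ`.
-/

open Set

/-- For a continuous, positive and nondecreasing weight `lam` on `[r,R]` and a C¹
solution `Φ` of `s·λ·Φ' = λ² − Φ²`, if `Φ(s₀) ≤ λ(s₀)` at some `s₀ ∈ [r,R]` then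
`Φ(s) ≤ λ(s)` for every `s ∈ [s₀,R]`. -/
theorem stmt_9 (r R : ℝ) (hr : 0 < r) (hrR : r < R)
    (lam Φ Φ' : ℝ → ℝ)
    (hlamc : ContinuousOn lam (Icc r R))
    (hlampos : ∀ s ∈ Icc r R, 0 < lam s)
    (hlammono : MonotoneOn lam (Icc r R))
    (hΦd : ∀ s ∈ Icc r R, HasDerivWithinAt Φ (Φ' s) (Icc r R) s)
    (hΦ'c : ContinuousOn Φ' (Icc r R))
    (hΦode : ∀ s ∈ Icc r R, s * lam s * Φ' s = lam s ^ 2 - Φ s ^ 2) :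
    ∀ s₀ ∈ Icc r R, Φ s₀ ≤ lam s₀ → ∀ s ∈ Icc r R, s₀ ≤ s → Φ s ≤ lam s := by
  intro s₀ hs₀ h₀ s hs hle
  refine le_of_forall_gt_imp_ge_of_dense fun c hc => ?_
  have hsub : Icc s₀ s ⊆ Icc r R := Icc_subset_Icc hs₀.1 hs.2
  refine image_le_of_deriv_right_lt_deriv_boundary (a := s₀) (b := s) (f := Φ) (f' := Φ')
    (B := fun _ => c) (B' := fun _ => 0) ?_ ?_ ?_ ?_ ?_ (right_mem_Icc.2 hle)
  · exact fun t ht => ((hΦd t (hsub ht)).continuousWithinAt).mono hsub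
  · intro t ht
    have ht' := hsub (Ico_subset_Icc_self ht)
    exact (hΦd t ht').mono_of_mem_nhdsWithin
      (Filter.mem_of_superset (Icc_mem_nhdsGE (ht.2.trans_le hs.2))
        (Icc_subset_Icc_left ht'.1))
  · exact h₀.trans ((hlammono hs₀ hs hle).trans hc.le)
  · exact fun t => hasDerivAt_const t c
  · intro t ht htc
    have ht' := hsub (Ico_subset_Icc_self ht)
    have hpos := hlampos t ht'
    have hlt : lam t < c := (hlammono ht' hs ht.2.le).trans_lt hc
    have hode := hΦode t ht'
    have hcoef : 0 < t * lam t := mul_pos (hr.trans_le ht'.1) hpos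
    rw [htc] at hode
    by_contra! hneg
    nlinarith [mul_nonneg hcoef.le hneg]
end

section
/- Let 0 < r < R and let λ : [r,R] → ℝ be continuously differentiable, positive and nondecreasing. Suppose Φ : [r,R] → ℝ is a C¹ function with Φ > 0 satisfying s·λ(s)·Φ'(s) = λ(s)² − Φ(s)², and H : [r,R] → ℝ is a positive C¹ function satisfying s·λ(s)·H'(s) = H(s)·Φ(s). Then at every s ∈ [r,R] one has the identity d/ds[(H(s)/Φ(s))·(Φ(s)² − λ(s)²)] = (λ(s)⁴·H(s)/Φ(s)²)·d/ds(Φ(s)/λ(s)²); consequently, at every point where Φ'(s) < 0, the function s ↦ (H(s)/Φ(s))·(Φ(s)² − λ(s)²) is strictly decreasing. -/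
/-!
Expanding the derivative of `(H/Φ)(Φ² - λ²)` by the product and quotient rules, the claimed
identity reduces to `H' (Φ² - λ²) = -H Φ Φ'`. This follows from the two differential equations:
the first turns `Φ² - λ²` into `-s λ Φ'`, the second turns `s λ H'` into `H Φ`.
The sign claim holds because `λ' ≥ 0` by monotonicity, so that `Φ' λ² - 2 Φ λ λ' < 0`
wherever `Φ' < 0`.
-/

open Set

/-- For a C¹, positive, nondecreasing weight `lam` (with derivative `lam'`),
a positive C¹ solution `Φ` of `s·λ·Φ' = λ² − Φ²` and a positive C¹ solution `H` of
`s·λ·H' = H·Φ`, one has the identity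
`d/ds[(H/Φ)·(Φ² − λ²)] = (λ⁴·H/Φ²)·d/ds(Φ/λ²)` on `[r,R]`;
consequently, at every point where `Φ' < 0`, this derivative is negative, so the function
`s ↦ (H(s)/Φ(s))·(Φ(s)² − λ(s)²)` is strictly decreasing there. -/
theorem stmt_10 (r R : ℝ) (hr : 0 < r) (hrR : r < R)
    (lam lam' Φ Φ' H H' : ℝ → ℝ)
    (hlamd : ∀ s ∈ Icc r R, HasDerivWithinAt lam (lam' s) (Icc r R) s)
    (hlam'c : ContinuousOn lam' (Icc r R))
    (hlampos : ∀ s ∈ Icc r R, 0 < lam s)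
    (hlammono : MonotoneOn lam (Icc r R))
    (hΦd : ∀ s ∈ Icc r R, HasDerivWithinAt Φ (Φ' s) (Icc r R) s)
    (hΦ'c : ContinuousOn Φ' (Icc r R))
    (hΦpos : ∀ s ∈ Icc r R, 0 < Φ s)
    (hΦode : ∀ s ∈ Icc r R, s * lam s * Φ' s = lam s ^ 2 - Φ s ^ 2)
    (hHd : ∀ s ∈ Icc r R, HasDerivWithinAt H (H' s) (Icc r R) s)
    (hH'c : ContinuousOn H' (Icc r R))
    (hHpos : ∀ s ∈ Icc r R, 0 < H s)
    (hHode : ∀ s ∈ Icc r R, s * lam s * H' s = H s * Φ s) :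
    ∀ s ∈ Icc r R,
      HasDerivWithinAt (fun t => H t / Φ t * (Φ t ^ 2 - lam t ^ 2))
        (lam s ^ 4 * H s / Φ s ^ 2 *
          ((Φ' s * lam s ^ 2 - Φ s * (2 * lam s * lam' s)) / lam s ^ 4))
        (Icc r R) s ∧
      (Φ' s < 0 →
        lam s ^ 4 * H s / Φ s ^ 2 *
          ((Φ' s * lam s ^ 2 - Φ s * (2 * lam s * lam' s)) / lam s ^ 4) < 0) := by
  intro s hs
  have hl := hlampos s hs
  have hP := hΦpos s hs
  have hH := hHpos s hs
  have hlam' : 0 ≤ lam' s := by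
    rw [← (hlamd s hs).derivWithin (uniqueDiffOn_Icc hrR s hs)]
    exact hlammono.derivWithin_nonneg
  refine ⟨?_, fun hneg => ?_⟩
  · have hd := ((hHd s hs).fun_div (hΦd s hs) hP.ne').fun_mul
      (((hΦd s hs).fun_pow 2).fun_sub ((hlamd s hs).fun_pow 2))
    refine hd.congr_deriv ?_
    -- After expanding both sides, every term cancels except `H' (Φ² - λ²) + H Φ Φ'`.
    have key : H' s * (Φ s ^ 2 - lam s ^ 2) = -(H s * Φ s * Φ' s) := by
      linear_combination H' s * hΦode s hs + (-Φ' s) * hHode s hs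
    field_simp
    push_cast
    linear_combination Φ s * key
  · have hnum : Φ' s * lam s ^ 2 - Φ s * (2 * lam s * lam' s) < 0 := by
      have h1 : Φ' s * lam s ^ 2 < 0 := mul_neg_of_neg_of_pos hneg (by positivity)
      have h2 : 0 ≤ Φ s * (2 * lam s * lam' s) := by positivity
      linarith
    exact mul_neg_of_pos_of_neg (by positivity) (div_neg_of_neg_of_pos hnum (by positivity))
end
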